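/- Let 𝔉 be an S-closed saturated formation of finite groups containing all supersoluble groups, and let G be a finite group with a normal subgroup H such that G/H ∈ 𝔉. Suppose that every maximal subgroup of every non-cyclic Sylow subgroup of the generalized Fitting subgroup F*(H) that has no supersoluble supplement in G is 𝔘ₛ-quasinormal in G. Then G ∈ 𝔉. -/

import Mathlib

open scoped Pointwise

universe u

/-- `M` is a maximal subgroup of `K` (within the subgroup lattice of the ambient group). -/
def IsMaximalIn {G : Type*} [Group G] (M K : Subgroup G) : Prop :=
  M < K ∧ ∀ L : Subgroup G, M < L → L ≤ K → L = K

/-- `P` is a Sylow `p`-subgroup of the subgroup `E`. -/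
def IsSylowIn {G : Type*} [Group G] (p : ℕ) (P E : Subgroup G) : Prop :=
  P ≤ E ∧ IsPGroup p P ∧ ¬ p ∣ (P.subgroupOf E).index

/-- `H` is s-permutable in `G`: it permutes with every Sylow subgroup of `G`. -/
def SPermutable {G : Type*} [Group G] (H : Subgroup G) : Prop :=
  ∀ q : ℕ, q.Prime → ∀ Q : Subgroup G, IsSylowIn q Q ⊤ →
    (H : Set G) * (Q : Set G) = (Q : Set G) * (H : Set G)

/-- `A/B` is a chief factor of the ambient group. -/
def IsChiefFactor {G : Type*} [Group G] (A B : Subgroup G) : Prop :=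
  A.Normal ∧ B.Normal ∧ B < A ∧ ∀ L : Subgroup G, L.Normal → B < L → L < A → False

/-- The 𝔘-hypercenter: the product of all normal subgroups `N` such that every chief
factor `A/B` with `A ≤ N` has prime order. -/
def UHypercenter (G : Type*) [Group G] : Subgroup G :=
  sSup {N : Subgroup G | N.Normal ∧
    ∀ A B : Subgroup G, IsChiefFactor A B → A ≤ N → (B.relIndex A).Prime}

/-- The 𝔖-hypercenter: the product of all normal subgroups `N` such that every chief
factor `A/B` with `A ≤ N` is abelian with `G/C_G(A/B)` soluble. -/
def SHypercenter (G : Type*) [Group G] : Subgroup G :=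
  sSup {N : Subgroup G | N.Normal ∧
    ∀ A B : Subgroup G, IsChiefFactor A B → A ≤ N →
      (∀ a ∈ A, ∀ b ∈ A, a * b * a⁻¹ * b⁻¹ ∈ B) ∧
      ∃ C : Subgroup G, ∃ _ : C.Normal,
        (∀ g : G, g ∈ C ↔ ∀ h ∈ A, g * h * g⁻¹ * h⁻¹ ∈ B) ∧ IsSolvable (G ⧸ C)}

/-- `H` is 𝔘ₛ-quasinormal in `G`. -/
def UsQuasinormal {G : Type*} [Group G] (H : Subgroup G) : Prop :=
  ∃ T : Subgroup G, T.Normal ∧ SPermutable (H ⊔ T) ∧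
    ∀ x ∈ H ⊓ T,
      (QuotientGroup.mk x : G ⧸ H.normalCore) ∈ UHypercenter (G ⧸ H.normalCore)

/-- `H` is 𝔖ₛ-quasinormal in `G`. -/
def SsQuasinormal {G : Type*} [Group G] (H : Subgroup G) : Prop :=
  ∃ T : Subgroup G, T.Normal ∧ SPermutable (H ⊔ T) ∧
    ∀ x ∈ H ⊓ T,
      (QuotientGroup.mk x : G ⧸ H.normalCore) ∈ SHypercenter (G ⧸ H.normalCore)

/-- A group is supersoluble if it has a chain of subgroups, each normal in the whole
group, reaching from `⊥` to `⊤`, with all successive factors cyclic. -/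
def IsSupersoluble (G : Type*) [Group G] : Prop :=
  ∃ (k : ℕ) (c : Fin (k + 1) → Subgroup G),
    c 0 = ⊥ ∧ c (Fin.last k) = ⊤ ∧ (∀ i, (c i).Normal) ∧
    (∀ i : Fin k, c i.castSucc ≤ c i.succ) ∧
    ∀ i : Fin k, ∃ g ∈ c i.succ, ∀ x ∈ c i.succ, ∃ m : ℤ, x⁻¹ * g ^ m ∈ c i.castSucc

/-- `A` is subnormal in `G`. -/
def IsSubnormal {G : Type*} [Group G] (A : Subgroup G) : Prop :=
  ∃ (n : ℕ) (c : Fin (n + 1) → Subgroup G), c 0 = A ∧ c (Fin.last n) = ⊤ ∧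
    ∀ i : Fin n, c i.castSucc ≤ c i.succ ∧
      ∀ x ∈ c i.succ, ∀ a ∈ c i.castSucc, x * a * x⁻¹ ∈ c i.castSucc

/-- `H` has a supersoluble supplement in the ambient group. -/
def HasSupersolubleSupplement {G : Type*} [Group G] (H : Subgroup G) : Prop :=
  ∃ T : Subgroup G, IsSupersoluble T ∧ (H : Set G) * (T : Set G) = Set.univ

/-- A group is `p`-nilpotent if it has a normal subgroup of order prime to `p`
and of `p`-power index (a normal `p`-complement). -/
def IsPNilpotent (p : ℕ) (G : Type*) [Group G] : Prop :=
  ∃ N : Subgroup G, N.Normal ∧ Nat.Coprime (Nat.card N) p ∧ ∃ k : ℕ, N.index = p ^ k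

/-- `H` has a `p`-nilpotent supplement in the ambient group. -/
def HasPNilpotentSupplement {G : Type*} [Group G] (p : ℕ) (H : Subgroup G) : Prop :=
  ∃ T : Subgroup G, IsPNilpotent p T ∧ (H : Set G) * (T : Set G) = Set.univ

/-- `H` is an `n`-maximal subgroup of `P`: there is a chain
`H = Hₙ < ⋯ < H₁ < H₀ = P` with each term maximal in the preceding one. -/
def IsNMaximalIn {G : Type*} [Group G] (n : ℕ) (H P : Subgroup G) : Prop :=
  ∃ c : Fin (n + 1) → Subgroup G, c 0 = P ∧ c (Fin.last n) = H ∧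
    ∀ i : Fin n, IsMaximalIn (c i.succ) (c i.castSucc)

/-- A group is quasinilpotent if every element induces an inner automorphism
on every chief factor. -/
def IsQuasinilpotentGroup (G : Type*) [Group G] : Prop :=
  ∀ A B : Subgroup G, IsChiefFactor A B →
    ∀ x : G, ∃ y ∈ A, ∀ h ∈ A, (x * h * x⁻¹) * (y * h * y⁻¹)⁻¹ ∈ B

/-- The generalized Fitting subgroup: the product of all normal quasinilpotent
subgroups. -/
def generalizedFitting (G : Type*) [Group G] : Subgroup G :=
  sSup {N : Subgroup G | N.Normal ∧ IsQuasinilpotentGroup N}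

/-- The generalized Fitting subgroup of a subgroup `H`, as a subgroup of `G`. -/
def FStarIn {G : Type*} [Group G] (H : Subgroup G) : Subgroup G :=
  (generalizedFitting H).map H.subtype

/-- The Fitting subgroup: the product of all nilpotent normal subgroups. -/
def fittingSubgroup (G : Type*) [Group G] : Subgroup G :=
  sSup {N : Subgroup G | N.Normal ∧ Group.IsNilpotent N}

/-- The Fitting subgroup of a subgroup `H`, as a subgroup of `G`. -/
def FittingIn {G : Type*} [Group G] (H : Subgroup G) : Subgroup G :=
  (fittingSubgroup H).map H.subtype

/-!
Put `F = F*(H)`. If `F` were not soluble, it would map onto a non-abelian simple group `S`; let `p`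
and `q` be the smallest and largest prime divisors of `|S|`. No maximal subgroup of a Sylow
`p`-subgroup `P` of `F` is `𝔘ₛ`-quasinormal, so all of them have supersoluble supplements and hence
act transitively on the Sylow `q`-subgroups of `S`. This forces `S` to have only one of these, a
contradiction. Thus `F` is nilpotent.

Let now `P` be any (normal) Sylow subgroup of `F`, and `N / D` the only minimal normal subgroup of
`G / D` in `P / D`, where `Φ(P) ≤ D`. Choose a maximal subgroup `M` of `P` with `D ≤ M`, `N ≰ M` and
`M ∩ N` normalized by a Sylow `p`-subgroup of `G`. A supersoluble supplement of `M` covers `N / D`,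
and if `M` is `𝔘ₛ`-quasinormal, then `M ∩ N` is normal or meets the `𝔘`-hypercenter modulo `D`. In
each case `N / D` has prime order, so `P / Φ(P)` is `𝔘`-hypercentral.

The elements of order prime to `p` in the `𝔉`-residual `R` of `G` therefore centralize `P`, which
together with `R ∩ C(F) ≤ F` makes `R` nilpotent; so `R ≤ F`. As `F` is `𝔘`-hypercentral
modulo `Φ(G)`, this gives `G / Φ(G) ∈ 𝔉`.
-/

/-! ## `𝔘`-hypercentral sections and supersolubility -/

/-- `A / B` is a section of prime order with both `A` and `B` normal in the ambient group. -/
structure IsPrimeSection {G : Type*} [Group G] (B A : Subgroup G) : Prop where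
  normal_left : B.Normal
  normal_right : A.Normal
  le : B ≤ A
  prime_relIndex : (B.relIndex A).Prime

/-- The section `A / B` is `𝔘`-hypercentral in the ambient group: a series of normal subgroups
with factors of prime order leads from `B` up to `A`. Normality of `B` is only recorded when the
series is nontrivial. -/
def UHypercentral {G : Type*} [Group G] (B A : Subgroup G) : Prop :=
  Relation.ReflTransGen IsPrimeSection B A

theorem relIndex_dvd_of_le_right {G : Type*} [Group G] {B K A : Subgroup G} [B.Normal]
    (hKA : K ≤ A) : B.relIndex K ∣ B.relIndex A := by
  rw [← Subgroup.relIndex_subgroupOf hKA]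
  exact Subgroup.relIndex_dvd_index_of_normal ..

theorem relIndex_inf_inf_dvd {G : Type*} [Group G] {B A X : Subgroup G} [B.Normal]
    (hBA : B ≤ A) : (B ⊓ X).relIndex (A ⊓ X) ∣ B.relIndex A := by
  rw [← inf_eq_left.2 hBA, inf_assoc, Subgroup.inf_relIndex_right, inf_eq_left.2 hBA]
  exact relIndex_dvd_of_le_right inf_le_left

theorem relIndex_sup_sup_dvd {G : Type*} [Group G] {B A X : Subgroup G} [B.Normal] [X.Normal]
    (hBA : B ≤ A) : (B ⊔ X).relIndex (A ⊔ X) ∣ B.relIndex A := by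
  rw [← sup_eq_left.2 hBA, sup_assoc, Subgroup.relIndex_sup_right, sup_eq_left.2 hBA]
  exact Subgroup.relIndex_dvd_of_le_left A le_sup_left

theorem IsChiefFactor.exists_le {G : Type*} [Group G] [Finite G] {B A : Subgroup G}
    (hB : B.Normal) (hA : A.Normal) (hBA : B < A) : ∃ N, IsChiefFactor N B ∧ N ≤ A := by
  obtain ⟨N, ⟨hN, hBN, hNA⟩, hmin⟩ := wellFounded_lt.has_min
    {N : Subgroup G | N.Normal ∧ B < N ∧ N ≤ A} ⟨A, hA, hBA, le_rfl⟩
  exact ⟨N, ⟨hN, hB, hBN, fun L hL hBL hLN ↦ hmin L ⟨hL, hBL, hLN.le.trans hNA⟩ hLN⟩, hNA⟩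

namespace UHypercentral

variable {G G' : Type*} [Group G] [Group G'] {B C A X : Subgroup G}

theorem rfl : UHypercentral A A := Relation.ReflTransGen.refl

theorem trans (hBC : UHypercentral B C) (hCA : UHypercentral C A) : UHypercentral B A :=
  Relation.ReflTransGen.trans hBC hCA

theorem le (h : UHypercentral B A) : B ≤ A := by
  induction h with
  | refl => exact le_rfl
  | tail _ h ih => exact ih.trans h.le

theorem normal (h : UHypercentral B A) (hB : B.Normal) : A.Normal := by
  induction h with
  | refl => exact hB
  | tail _ h => exact h.normal_right

theorem map_of_relIndex_dvd (f : Subgroup G → Subgroup G')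
    (hnormal : ∀ X, X.Normal → (f X).Normal) (hmono : Monotone f)
    (hdvd : ∀ B A, B.Normal → B ≤ A → (f B).relIndex (f A) ∣ B.relIndex A)
    (h : UHypercentral B A) : UHypercentral (f B) (f A) := by
  induction h with
  | refl => exact .refl
  | @tail C A _ h ih =>
    obtain h1 | hprime := (Nat.dvd_prime h.prime_relIndex).1 (hdvd _ _ h.normal_left h.le)
    · rwa [← (hmono h.le).antisymm (Subgroup.relIndex_eq_one.1 h1)]
    · exact ih.tail ⟨hnormal _ h.normal_left, hnormal _ h.normal_right, hmono h.le,
        hprime ▸ h.prime_relIndex⟩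

theorem comap (f : G' →* G) (h : UHypercentral B A) : UHypercentral (B.comap f) (A.comap f) := by
  refine h.map_of_relIndex_dvd _ (fun X hX ↦ hX.comap f) (fun _ _ h ↦ Subgroup.comap_mono h)
    fun B A hB _ ↦ ?_
  rw [Subgroup.relIndex_comap]
  exact relIndex_dvd_of_le_right (Subgroup.map_comap_le f A)

theorem map {f : G →* G'} (hf : Function.Surjective f) (h : UHypercentral B A) :
    UHypercentral (B.map f) (A.map f) := by
  exact h.map_of_relIndex_dvd _ (fun X hX ↦ hX.map f hf) (fun _ _ h ↦ Subgroup.map_mono h)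
    fun B A hB hBA ↦ Subgroup.relIndex_map_map f B A ▸ relIndex_sup_sup_dvd hBA

theorem inf_right (hX : X.Normal) (h : UHypercentral B A) : UHypercentral (B ⊓ X) (A ⊓ X) := by
  exact h.map_of_relIndex_dvd (· ⊓ X) (fun Y _ ↦ Subgroup.normal_inf_normal Y X)
    (fun _ _ h ↦ inf_le_inf_right X h) fun _ _ _ ↦ relIndex_inf_inf_dvd

theorem sup_right (hX : X.Normal) (h : UHypercentral B A) : UHypercentral (B ⊔ X) (A ⊔ X) := by
  exact h.map_of_relIndex_dvd (· ⊔ X) (fun Y _ ↦ Subgroup.sup_normal Y X)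
    (fun _ _ h ↦ sup_le_sup_right h X) fun B A _ hBA ↦ relIndex_sup_sup_dvd hBA

theorem prime_relIndex (h : UHypercentral B A) (hc : IsChiefFactor A B) :
    (B.relIndex A).Prime := by
  obtain rfl | ⟨C, hBC, hCA⟩ := Relation.ReflTransGen.cases_head h
  · exact absurd hc.2.2.1 (lt_irrefl _)
  · have hlt : B < C := hBC.le.lt_of_ne fun h ↦ by
      simpa [h, Nat.not_prime_one] using hBC.prime_relIndex
    obtain rfl | hCA := eq_or_lt_of_le (le hCA)
    · exact hBC.prime_relIndex
    · exact (hc.2.2.2 C hBC.normal_right hlt hCA).elim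

theorem of_isChiefFactor [Finite G] (hA : A.Normal)
    (hprime : ∀ M N : Subgroup G, IsChiefFactor M N → M ≤ A → (N.relIndex M).Prime)
    (hB : B.Normal) (hBA : B ≤ A) : UHypercentral B A := by
  induction B using WellFoundedGT.induction with
  | ind B ih =>
    obtain rfl | hlt := eq_or_lt_of_le hBA
    · exact rfl
    · obtain ⟨N, hN, hNA⟩ := IsChiefFactor.exists_le hB hA hlt
      exact .head ⟨hB, hN.1, hN.2.2.1.le, hprime N B hN hNA⟩ (ih N hN.2.2.1 hN.1 hNA)

theorem of_forall_normal [Finite G] (hBA : B ≤ A)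
    (hnormal : ∀ C, B ≤ C → C ≤ A → C.Normal) : UHypercentral B A := by
  induction B using WellFoundedGT.induction with
  | ind B ih =>
    have hB := hnormal B le_rfl hBA
    obtain rfl | hlt := eq_or_lt_of_le hBA
    · exact rfl
    · obtain ⟨p, hp, hpd⟩ := Nat.exists_prime_and_dvd
        (mt Subgroup.relIndex_eq_one.1 hlt.not_ge)
      have := Fact.mk hp
      rw [← QuotientGroup.ker_mk' B, Subgroup.relIndex_ker] at hpd
      obtain ⟨⟨_, a, ha, rfl⟩, horder⟩ := exists_prime_orderOf_dvd_card' p hpd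
      have hcard : B.relIndex (B ⊔ Subgroup.zpowers a) = p := by
        rw [Subgroup.relIndex_sup_left]
        nth_rw 1 [← QuotientGroup.ker_mk' B]
        rw [Subgroup.relIndex_ker, MonoidHom.map_zpowers, Nat.card_zpowers, ← horder,
          ← Subgroup.orderOf_coe]
      have hCA : B ⊔ Subgroup.zpowers a ≤ A := sup_le hBA (by simpa using ha)
      have hne : B ≠ B ⊔ Subgroup.zpowers a := fun h ↦ by
        rw [← h, Subgroup.relIndex_self] at hcard
        exact hp.ne_one hcard.symm
      exact .head ⟨hB, hnormal _ le_sup_left hCA, le_sup_left, hcard ▸ hp⟩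
        (ih _ (le_sup_left.lt_of_ne hne) hCA fun C hC ↦ hnormal C (le_sup_left.trans hC))

theorem of_commutator_le [Finite G] (h : commutator G ≤ B) : UHypercentral B ⊤ :=
  of_forall_normal le_top fun _ hC _ ↦ Subgroup.Normal.of_commutator_le _ (h.trans hC)

theorem of_cyclic [Finite G] (hB : B.Normal) (hA : A.Normal) (hBA : B ≤ A) {g : G} (hg : g ∈ A)
    (hcyclic : ∀ x ∈ A, ∃ m : ℤ, x⁻¹ * g ^ m ∈ B) : UHypercentral B A := by
  have hpow (x : G) (hx : x ∈ A) : ∃ m : ℤ, (x : G ⧸ B) = (g : G ⧸ B) ^ m :=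
    (hcyclic x hx).imp fun m hm ↦ (QuotientGroup.eq.2 hm : (x : G ⧸ B) = ↑(g ^ m))
  refine of_forall_normal hBA fun C hBC hCA ↦ ⟨fun c hc y ↦ ?_⟩
  obtain ⟨i, hi⟩ := hpow c (hCA hc)
  obtain ⟨k, hk⟩ := hpow _ (hA.conj_mem g hg y)
  have hconj : (y * c * y⁻¹ : G) = ((c ^ k : G) : G ⧸ B) := by
    simp only [QuotientGroup.mk_mul, QuotientGroup.mk_inv, QuotientGroup.mk_zpow] at hk ⊢
    rw [hi, ← conj_zpow, hk, ← zpow_mul, ← zpow_mul, mul_comm]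
  have hdiv := hBC (QuotientGroup.eq_iff_div_mem.1 hconj)
  exact (Subgroup.mul_mem_cancel_right C (C.inv_mem (C.zpow_mem hc k))).1
    (div_eq_mul_inv (y * c * y⁻¹) (c ^ k) ▸ hdiv)

theorem exists_greatest [Finite G] (B : Subgroup G) [hB : B.Normal] :
    ∃ A, UHypercentral B A ∧ ∀ C, UHypercentral B C → C ≤ A := by
  obtain ⟨A, hA, hmax⟩ := (Set.toFinite {A : Subgroup G | UHypercentral B A}).exists_maximal
    ⟨B, .rfl⟩
  refine ⟨A, hA, fun C hC ↦ ?_⟩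
  have hAC := hA.sup_right (hC.normal hB)
  rw [sup_eq_right.2 hC.le] at hAC
  exact le_sup_right.trans (hmax (hC.trans hAC) le_sup_left)

theorem isSolvable [Finite G] (h : UHypercentral B A) (hB : Group.IsSolvable B) :
    Group.IsSolvable A := by
  induction h with
  | refl => exact hB
  | @tail C A _ h ih =>
    have := h.normal_left
    have : Fact (C.relIndex A).Prime := ⟨h.prime_relIndex⟩
    have : IsCyclic (A ⧸ C.subgroupOf A) := isCyclic_of_prime_card (p := C.relIndex A) _root_.rfl
    let := IsCyclic.commGroup (α := A ⧸ C.subgroupOf A)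
    exact Group.isSolvable_of_ker_le_range (Subgroup.inclusion h.le)
      (QuotientGroup.mk' (C.subgroupOf A)) (by simp [Subgroup.inclusion_range])

end UHypercentral

theorem uHypercentral_uHypercenter (G : Type*) [Group G] [Finite G] :
    UHypercentral ⊥ (UHypercenter G) := by
  obtain ⟨M, hM, hmax⟩ := UHypercentral.exists_greatest (⊥ : Subgroup G)
  have hle : UHypercenter G ≤ M := sSup_le fun S ⟨hS, hprime⟩ ↦
    hmax S (UHypercentral.of_isChiefFactor hS hprime inferInstance bot_le)
  have hnormal : (UHypercenter G).Normal := Subgroup.sSup_normal _ fun S hS ↦ hS.1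
  have := hM.inf_right hnormal
  rwa [bot_inf_eq, inf_eq_right.2 hle] at this

theorem exists_relSeries_of_reflTransGen {α : Type*} {r : α → α → Prop} {a b : α}
    (h : Relation.ReflTransGen r a b) :
    ∃ s : RelSeries {(x, y) | r x y}, s.head = a ∧ s.last = b := by
  induction h with
  | refl => exact ⟨RelSeries.singleton _ a, rfl, rfl⟩
  | tail _ h ih =>
    obtain ⟨s, rfl, rfl⟩ := ih
    exact ⟨s.snoc _ h, by simp, by simp⟩

theorem IsPrimeSection.exists_generator {G : Type*} [Group G] {B A : Subgroup G}
    (h : IsPrimeSection B A) : ∃ g ∈ A, ∀ x ∈ A, ∃ m : ℤ, x⁻¹ * g ^ m ∈ B := by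
  have := h.normal_left
  have : Fact (B.relIndex A).Prime := ⟨h.prime_relIndex⟩
  have : IsCyclic (A ⧸ B.subgroupOf A) := isCyclic_of_prime_card (p := B.relIndex A) rfl
  obtain ⟨g, hg⟩ := IsCyclic.exists_generator (α := A ⧸ B.subgroupOf A)
  obtain ⟨g, rfl⟩ := QuotientGroup.mk_surjective g
  refine ⟨g, g.2, fun x hx ↦ ?_⟩
  obtain ⟨m, hm⟩ := hg (⟨x, hx⟩ : A)
  exact ⟨m, (QuotientGroup.eq (s := B.subgroupOf A)).1 hm.symm⟩

theorem isSupersoluble_iff_uHypercentral {G : Type*} [Group G] [Finite G] :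
    IsSupersoluble G ↔ UHypercentral (⊥ : Subgroup G) ⊤ := by
  constructor
  · rintro ⟨k, c, h0, hlast, hnormal, hle, hcyclic⟩
    suffices ∀ i, UHypercentral ⊥ (c i) from hlast ▸ this (Fin.last k)
    refine Fin.induction (h0 ▸ .rfl) fun i ih ↦ ?_
    obtain ⟨g, hg, hx⟩ := hcyclic i
    exact ih.trans (.of_cyclic (hnormal _) (hnormal _) (hle i) hg hx)
  · intro h
    obtain ⟨s, hhead, hlast⟩ := exists_relSeries_of_reflTransGen h
    refine ⟨s.length, s, hhead, hlast, ?_, fun i ↦ (s.step i).le,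
      fun i ↦ (s.step i).exists_generator⟩
    exact Fin.cases (by rw [← RelSeries.head, hhead]; infer_instance)
      fun i ↦ (s.step i).normal_right

theorem UHypercentral.isSupersoluble_quotient {G : Type*} [Group G] [Finite G] {D : Subgroup G}
    [D.Normal] (h : UHypercentral D ⊤) : IsSupersoluble (G ⧸ D) := by
  have := h.map (QuotientGroup.mk'_surjective D)
  rw [QuotientGroup.map_mk'_self, Subgroup.map_top_of_surjective _
    (QuotientGroup.mk'_surjective D)] at this
  exact isSupersoluble_iff_uHypercentral.2 this

/-! ## Centralizers of sections and elements of prime power order -/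

section Centralizer

variable {G : Type*} [Group G]

theorem commutator_le_centralizer_of_isCyclic (N : Subgroup G) [N.Normal] [IsCyclic N] :
    commutator G ≤ Subgroup.centralizer (N : Set G) := by
  let f : G →* (ZMod (Nat.card N))ˣ :=
    (IsCyclic.mulAutMulEquiv N).toMonoidHom.comp MulAut.conjNormal
  refine (Abelianization.commutator_subset_ker f).trans fun g hg ↦ ?_
  have hconj : (MulAut.conjNormal g : MulAut N) = 1 :=
    (IsCyclic.mulAutMulEquiv N).map_eq_one_iff.1 hg
  refine Subgroup.mem_centralizer_iff.2 fun n hn ↦ ?_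
  have := congrArg Subtype.val (DFunLike.congr_fun hconj ⟨n, hn⟩)
  exact (mul_inv_eq_iff_eq_mul.1 (by simpa using this)).symm

theorem normal_inf_centralizer_of_sup_eq_top {M N : Subgroup G} [N.Normal] (h : N ⊔ M = ⊤) :
    (M ⊓ Subgroup.centralizer (N : Set G)).Normal := by
  rw [← Subgroup.normalizer_eq_top_iff, eq_top_iff, ← h, sup_le_iff]
  refine ⟨?_, fun m hm ↦ Subgroup.mem_normalizer_iff.2 fun d ↦ ?_⟩
  · exact (Subgroup.le_centralizer_iff.1 (inf_le_right : M ⊓ _ ≤ _)).trans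
      (Subgroup.centralizer_le_normalizer _)
  · have hC : (Subgroup.centralizer (N : Set G)).Normal := inferInstance
    exact and_congr ((Subgroup.mul_mem_cancel_right M (inv_mem hm)).trans
      (Subgroup.mul_mem_cancel_left M hm)).symm ⟨fun hd ↦ hC.conj_mem d hd m, fun hd ↦ by
        simpa [mul_assoc] using hC.conj_mem _ hd m⁻¹⟩

/-- The centralizer `C_G(A / B)` of a section. -/
def sectionCentralizer (B A : Subgroup G) [B.Normal] : Subgroup G :=
  (Subgroup.centralizer (A.map (QuotientGroup.mk' B) : Set (G ⧸ B))).comap (QuotientGroup.mk' B)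

theorem mem_sectionCentralizer {B A : Subgroup G} [B.Normal] {x : G} :
    x ∈ sectionCentralizer B A ↔ ∀ a ∈ A, Commute (x : G ⧸ B) a := by
  simp only [sectionCentralizer, Subgroup.mem_comap, Subgroup.mem_centralizer_iff,
    Subgroup.coe_map, Set.forall_mem_image]
  exact forall₂_congr fun a _ ↦ eq_comm

instance sectionCentralizer_normal (B A : Subgroup G) [B.Normal] [A.Normal] :
    (sectionCentralizer B A).Normal := by
  have : (A.map (QuotientGroup.mk' B)).Normal :=
    Subgroup.Normal.map ‹_› _ (QuotientGroup.mk'_surjective B)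
  exact Subgroup.Normal.comap inferInstance _

theorem IsPrimeSection.commutator_le_sectionCentralizer {B A : Subgroup G} [B.Normal]
    (h : IsPrimeSection B A) : commutator G ≤ sectionCentralizer B A := by
  have : (A.map (QuotientGroup.mk' B)).Normal :=
    h.normal_right.map _ (QuotientGroup.mk'_surjective B)
  have hcard : Nat.card (A.map (QuotientGroup.mk' B)) = B.relIndex A := by
    rw [← Subgroup.relIndex_ker, QuotientGroup.ker_mk']
  have : Fact (B.relIndex A).Prime := ⟨h.prime_relIndex⟩
  have := isCyclic_of_prime_card hcard
  rw [sectionCentralizer, ← Subgroup.map_le_iff_le_comap, commutator_def, Subgroup.map_commutator]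
  exact (Subgroup.commutator_mono le_top le_top).trans (commutator_le_centralizer_of_isCyclic _)

/-- `x` is a `p`-element: its order is a power of `p` (when `p` is prime). -/
def IsPElement (p : ℕ) (x : G) : Prop := ∃ k : ℕ, x ^ p ^ k = 1

theorem IsPElement.isPGroup_zpowers {p : ℕ} {x : G} (hx : IsPElement p x) :
    IsPGroup p (Subgroup.zpowers x) := by
  obtain ⟨k, hk⟩ := hx
  rintro ⟨_, m, rfl⟩
  refine ⟨k, Subtype.ext ?_⟩
  simp only [SubgroupClass.coe_pow, OneMemClass.coe_one]
  rw [← zpow_natCast, ← zpow_mul, mul_comm, zpow_mul, zpow_natCast, hk, one_zpow]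

-- A `q`-group acting by conjugation on the coset `gN` has a fixed point, since `q ∤ |gN| = |N|`.
theorem IsPElement.exists_commute_mk_eq {q : ℕ} (hq : q.Prime) {x : G} (hx : IsPElement q x)
    {N : Subgroup G} [N.Normal] (hN : ¬ q ∣ Nat.card N) {g : G} (hxg : Commute (x : G ⧸ N) g) :
    ∃ a, Commute x a ∧ (a : G ⧸ N) = g := by
  let coset := {a : G // (a : G ⧸ N) = g}
  have hfix (y : Subgroup.zpowers x) : Commute ((y : G) : G ⧸ N) g := by
    obtain ⟨_, m, rfl⟩ := y
    exact hxg.zpow_left m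
  let : MulAction (Subgroup.zpowers x) coset :=
    { smul y a := ⟨y * a * (y : G)⁻¹, by
        simp [a.2, (hfix y).eq]⟩
      one_smul a := Subtype.ext (show 1 * a.1 * 1⁻¹ = a.1 by simp)
      mul_smul y z a := Subtype.ext
        (show (y * z : G) * a * (y * z : G)⁻¹ = y * (z * a * (z : G)⁻¹) * (y : G)⁻¹ by group) }
  have hcard : Nat.card coset = Nat.card N := Nat.card_congr
    { toFun a := ⟨g⁻¹ * a, QuotientGroup.eq.1 a.2.symm⟩
      invFun n := ⟨g * n, by simp⟩
      left_inv a := by simp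
      right_inv n := by simp }
  have := Fact.mk hq
  obtain ⟨a, ha⟩ := hx.isPGroup_zpowers.nonempty_fixed_point_of_prime_not_dvd_card coset
    (hcard ▸ hN)
  have hxa : x * a * x⁻¹ = a := congrArg Subtype.val (ha ⟨x, Subgroup.mem_zpowers x⟩)
  exact ⟨a, mul_inv_eq_iff_eq_mul.1 hxa, a.2⟩

theorem IsPElement.le_centralizer_inf_sup {q : ℕ} (hq : q.Prime) {B A : Subgroup G} [B.Normal]
    (hBA : B ≤ A) (hB : ¬ q ∣ Nat.card B) {x : G} (hx : IsPElement q x)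
    (hxA : x ∈ sectionCentralizer B A) : A ≤ (Subgroup.centralizer {x} ⊓ A) ⊔ B := by
  intro g hg
  obtain ⟨a, hxa, hag⟩ := hx.exists_commute_mk_eq hq hB (mem_sectionCentralizer.1 hxA g hg)
  have hab : a⁻¹ * g ∈ B := QuotientGroup.eq.1 hag
  have haA : a ∈ A := by simpa using A.mul_mem hg (A.inv_mem (hBA hab))
  have := Subgroup.mul_mem_sup (S := Subgroup.centralizer {x} ⊓ A)
    ⟨Subgroup.mem_centralizer_singleton_iff.2 hxa.symm, haA⟩ hab
  rwa [mul_inv_cancel_left] at this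

end Centralizer

/-! ## Saturated formations containing the supersoluble groups -/

/-- `𝔉` is a saturated formation of finite groups containing every supersoluble group. -/
structure IsSaturatedFormationContainingU (𝔉 : ∀ (X : Type u) [Group X], Prop) : Prop where
  of_surjective : ∀ (X Y : Type u) [Group X] [Group Y] [Finite X] [Finite Y] (f : X →* Y),
    Function.Surjective f → 𝔉 X → 𝔉 Y
  quotient_inf : ∀ (X : Type u) [Group X] [Finite X] (M N : Subgroup X)
    (_ : M.Normal) (_ : N.Normal), 𝔉 (X ⧸ M) → 𝔉 (X ⧸ N) → 𝔉 (X ⧸ (M ⊓ N))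
  of_quotient_frattini : ∀ (X : Type u) [Group X] [Finite X], 𝔉 (X ⧸ frattini X) → 𝔉 X
  of_isSupersoluble : ∀ (X : Type u) [Group X] [Finite X], IsSupersoluble X → 𝔉 X

theorem exists_isCoatom_not_le_of_not_le_frattini {G : Type*} [Group G] {N : Subgroup G}
    (h : ¬ N ≤ frattini G) : ∃ M : Subgroup G, IsCoatom M ∧ ¬ N ≤ M := by
  contrapose! h
  exact le_iInf₂ h

-- The subgroup `D` is `M ⊓ C(N)`.
theorem exists_normal_disjoint_isSupersoluble_quotient {G : Type*} [Group G] [Finite G]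
    {M N : Subgroup G} [N.Normal] (hN : (Nat.card N).Prime) (hM : IsCoatom M) (hNM : ¬ N ≤ M) :
    ∃ D : Subgroup G, ∃ _ : D.Normal, Disjoint D N ∧ IsSupersoluble (G ⧸ D) := by
  have hsup : N ⊔ M = ⊤ := hM.2 _ (le_sup_right.lt_of_not_ge fun h ↦ hNM (le_sup_left.trans h))
  have := Fact.mk hN
  have : IsCyclic N := isCyclic_of_prime_card (p := Nat.card N) rfl
  have hDn := normal_inf_centralizer_of_sup_eq_top hsup
  set C := Subgroup.centralizer (N : Set G)
  have hNC : N ≤ C := Subgroup.le_centralizer N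
  have hDN : (M ⊓ C) ⊓ N = ⊥ := by
    refine Subgroup.eq_bot_of_card_eq _ (((Nat.dvd_prime hN).1
      (Subgroup.card_dvd_of_le inf_le_right)).resolve_right fun hcard ↦ hNM ?_)
    rw [← Subgroup.eq_of_le_of_card_ge (inf_le_right : M ⊓ C ⊓ N ≤ N) hcard.ge, inf_assoc]
    exact inf_le_left
  have hC : C ≤ N ⊔ (M ⊓ C) := fun c hc ↦ by
    obtain ⟨n, hn, m, hm, rfl⟩ := Subgroup.mem_sup_of_normal_left.1 (hsup ▸ Subgroup.mem_top c)
    exact Subgroup.mul_mem_sup hn ⟨hm, (Subgroup.mul_mem_cancel_left C (hNC hn)).1 hc⟩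
  have hindex : (M ⊓ C).relIndex (N ⊔ M ⊓ C) = Nat.card N := by
    rw [Subgroup.relIndex_sup_right, ← Subgroup.inf_relIndex_right, hDN,
      Subgroup.relIndex_bot_left]
  refine ⟨M ⊓ C, hDn, disjoint_iff.2 hDN, UHypercentral.isSupersoluble_quotient <|
    .head ⟨hDn, Subgroup.sup_normal N _, le_sup_right, hindex ▸ hN⟩
      (UHypercentral.of_commutator_le ((commutator_le_centralizer_of_isCyclic N).trans hC))⟩

namespace IsSaturatedFormationContainingU

variable {𝔉 : ∀ (X : Type u) [Group X], Prop} {G : Type u} [Group G] [Finite G]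

theorem quotient_mono (h𝔉 : IsSaturatedFormationContainingU 𝔉) {A B : Subgroup G} [A.Normal]
    [B.Normal] (hAB : A ≤ B) (hA : 𝔉 (G ⧸ A)) : 𝔉 (G ⧸ B) :=
  h𝔉.of_surjective _ _ (QuotientGroup.map A B (MonoidHom.id G) hAB)
    (QuotientGroup.map_surjective_of_surjective _ _ _ (QuotientGroup.mk_surjective.comp
      Function.surjective_id) _) hA

theorem of_quotient_prime (h𝔉 : IsSaturatedFormationContainingU 𝔉) (N : Subgroup G)
    [N.Normal] (hN : (Nat.card N).Prime) (h : 𝔉 (G ⧸ N)) : 𝔉 G := by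
  by_cases hfrattini : N ≤ frattini G
  · exact h𝔉.of_quotient_frattini G (h𝔉.quotient_mono hfrattini h)
  · obtain ⟨M, hM, hNM⟩ := exists_isCoatom_not_le_of_not_le_frattini hfrattini
    obtain ⟨D, hD, hDN, hss⟩ := exists_normal_disjoint_isSupersoluble_quotient hN hM hNM
    have hinf := h𝔉.quotient_inf G D N hD inferInstance (h𝔉.of_isSupersoluble _ hss) h
    let e := (QuotientGroup.quotientMulEquivOfEq hDN.eq_bot).trans QuotientGroup.quotientBot
    exact h𝔉.of_surjective _ _ e.toMonoidHom e.surjective hinf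

theorem of_quotient_isPrimeSection (h𝔉 : IsSaturatedFormationContainingU 𝔉) {B A : Subgroup G}
    [B.Normal] [A.Normal] (hBA : IsPrimeSection B A) (h : 𝔉 (G ⧸ A)) : 𝔉 (G ⧸ B) := by
  have : (A.map (QuotientGroup.mk' B)).Normal :=
    Subgroup.Normal.map ‹_› _ (QuotientGroup.mk'_surjective B)
  let e := QuotientGroup.quotientQuotientEquivQuotient B A hBA.le
  refine h𝔉.of_quotient_prime (A.map (QuotientGroup.mk' B)) ?_
    (h𝔉.of_surjective _ _ e.symm.toMonoidHom e.symm.surjective h)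
  rw [← Subgroup.relIndex_ker, QuotientGroup.ker_mk']
  exact hBA.prime_relIndex

theorem of_quotient_uHypercentral (h𝔉 : IsSaturatedFormationContainingU 𝔉) {B A : Subgroup G}
    [hB : B.Normal] [A.Normal] (hBA : UHypercentral B A) (h : 𝔉 (G ⧸ A)) : 𝔉 (G ⧸ B) := by
  suffices ∀ _ : B.Normal, 𝔉 (G ⧸ B) from this hB
  induction hBA using Relation.ReflTransGen.head_induction_on with
  | refl => exact fun _ ↦ h
  | head hBC _ ih =>
    intro _
    have := hBC.normal_right
    exact h𝔉.of_quotient_isPrimeSection hBC (ih this)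

-- `C` is the intersection of the centralizers of the factors of the series from `D` to `P`.
theorem exists_centralizing_of_uHypercentral (h𝔉 : IsSaturatedFormationContainingU 𝔉)
    {D P : Subgroup G} (hDP : UHypercentral D P) :
    ∃ C : Subgroup G, ∃ _ : C.Normal, 𝔉 (G ⧸ C) ∧ ∀ q : ℕ, q.Prime → ¬ q ∣ Nat.card P →
      ∀ x ∈ C, IsPElement q x → P ≤ (Subgroup.centralizer {x} ⊓ P) ⊔ D := by
  induction hDP with
  | refl =>
    exact ⟨⊤, inferInstance, h𝔉.of_isSupersoluble _ (UHypercentral.isSupersoluble_quotient .rfl),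
      fun _ _ _ _ _ _ ↦ le_sup_right⟩
  | @tail B A _ hBA ih =>
    obtain ⟨C, hC, hFC, hcent⟩ := ih
    have := hBA.normal_left
    have := hBA.normal_right
    refine ⟨C ⊓ sectionCentralizer B A, inferInstance, h𝔉.quotient_inf _ _ _ hC inferInstance hFC
      (h𝔉.of_isSupersoluble _ (UHypercentral.isSupersoluble_quotient
        (UHypercentral.of_commutator_le hBA.commutator_le_sectionCentralizer))), ?_⟩
    intro q hq hqA x hx hxq
    have hqB : ¬ q ∣ Nat.card B := fun h ↦ hqA (h.trans (Subgroup.card_dvd_of_le hBA.le))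
    have hB : B ≤ (Subgroup.centralizer {x} ⊓ A) ⊔ D := (hcent q hq hqB x hx.1 hxq).trans
      (sup_le_sup_right (inf_le_inf_left _ hBA.le) D)
    exact (hxq.le_centralizer_inf_sup hq hBA.le hqB hx.2).trans (sup_le le_sup_left hB)

end IsSaturatedFormationContainingU

/-! ## Quasinilpotent groups and the generalized Fitting subgroup -/

open scoped commutatorElement

section Section

variable {G : Type*} [Group G] {A B E : Subgroup G}

theorem le_sectionCentralizer_iff [B.Normal] : E ≤ sectionCentralizer B A ↔ ⁅E, A⁆ ≤ B := by
  rw [sectionCentralizer, ← Subgroup.map_le_iff_le_comap,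
    ← Subgroup.commutator_eq_bot_iff_le_centralizer, ← Subgroup.map_commutator,
    Subgroup.map_eq_bot_iff, QuotientGroup.ker_mk']

theorem mem_sectionCentralizer_iff_commutatorElement_mem [B.Normal] {x : G} :
    x ∈ sectionCentralizer B A ↔ ∀ a ∈ A, ⁅x, a⁆ ∈ B :=
  mem_sectionCentralizer.trans <| forall₂_congr fun a _ ↦ by
    rw [← commutatorElement_eq_one_iff_commute, ← QuotientGroup.eq_one_iff]
    exact Iff.rfl

theorem le_sup_sectionCentralizer [B.Normal] (hBA : B ≤ A)
    (h : E.map (QuotientGroup.mk' B) ≤ A.map (QuotientGroup.mk' B) ⊔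
      Subgroup.centralizer (A.map (QuotientGroup.mk' B) : Set (G ⧸ B))) :
    E ≤ A ⊔ sectionCentralizer B A := by
  rwa [Subgroup.map_le_iff_le_comap,
    ← Subgroup.comap_sup_eq _ _ _ (QuotientGroup.mk'_surjective B),
    Subgroup.comap_map_eq_self (by rwa [QuotientGroup.ker_mk'])] at h

theorem mem_sup_centralizer {x : G} :
    x ∈ A ⊔ Subgroup.centralizer (A : Set G) ↔ ∃ a ∈ A, a⁻¹ * x ∈ Subgroup.centralizer A := by
  rw [← SetLike.mem_coe, Subgroup.coe_mul_of_right_le_normalizer_left A _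
    (Subgroup.centralizer_le_normalizer _), Set.mem_mul]
  refine exists_congr fun a ↦ and_congr_right fun _ ↦ ⟨?_, fun h ↦ ⟨_, h, by simp⟩⟩
  rintro ⟨c, hc, rfl⟩
  simpa using hc

theorem IsChiefFactor.le_or_sup_eq {N : Subgroup G} (hAB : IsChiefFactor A B) (hN : N.Normal)
    (hNA : N ≤ A) : N ≤ B ∨ N ⊔ B = A := by
  obtain ⟨-, hB, hlt, hmin⟩ := hAB
  by_contra! ⟨hNB, hsup⟩
  exact hmin (N ⊔ B) (Subgroup.sup_normal N B) (right_lt_sup.2 hNB)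
    ((sup_le hNA hlt.le).lt_of_ne hsup)

theorem IsChiefFactor.comap {G' : Type*} [Group G'] {f : G' →* G} (hf : Function.Surjective f)
    (hAB : IsChiefFactor A B) : IsChiefFactor (A.comap f) (B.comap f) := by
  obtain ⟨hA, hB, hlt, hmin⟩ := hAB
  refine ⟨hA.comap f, hB.comap f, (Subgroup.comap_lt_comap_of_surjective hf).2 hlt,
    fun L hL hBL hLA ↦ ?_⟩
  have hcomap : (L.map f).comap f = L :=
    Subgroup.comap_map_eq_self ((Subgroup.ker_le_comap f B).trans hBL.le)
  rw [← hcomap, Subgroup.comap_lt_comap_of_surjective hf] at hBL hLA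
  exact hmin (L.map f) (hL.map f hf) hBL hLA

theorem IsChiefFactor.map_mk' [B.Normal] (hAB : IsChiefFactor A B) :
    IsChiefFactor (A.map (QuotientGroup.mk' B)) ⊥ := by
  obtain ⟨hA, -, hlt, hmin⟩ := hAB
  have hs := QuotientGroup.mk'_surjective B
  have hAcomap : (A.map (QuotientGroup.mk' B)).comap (QuotientGroup.mk' B) = A :=
    Subgroup.comap_map_eq_self (by rw [QuotientGroup.ker_mk']; exact hlt.le)
  have hBcomap : (⊥ : Subgroup (G ⧸ B)).comap (QuotientGroup.mk' B) = B := by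
    rw [MonoidHom.comap_bot, QuotientGroup.ker_mk']
  refine ⟨hA.map _ hs, inferInstance, ?_, fun L hL hbot hLA ↦ ?_⟩
  · rwa [← Subgroup.comap_lt_comap_of_surjective hs, hAcomap, hBcomap]
  · rw [← Subgroup.comap_lt_comap_of_surjective hs] at hbot hLA
    exact hmin _ (hL.comap _) (hBcomap ▸ hbot) (hAcomap ▸ hLA)

theorem IsChiefFactor.le_of_conj_le {J : Subgroup G} (hA : IsChiefFactor A ⊥) (hEA : E ≤ A)
    (hE : E ≠ ⊥) (hJ : ∀ x : G, MulAut.conj x • E ≤ J) : A ≤ J := by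
  have := hA.1
  have hsup := hA.le_or_sup_eq Subgroup.normalClosure_normal
    (Subgroup.normalClosure_le_normal hEA)
  rw [sup_bot_eq] at hsup
  rw [← hsup.resolve_left fun h ↦ hE (le_bot_iff.1 (Subgroup.le_normalClosure.trans h)),
    Subgroup.normalClosure, Subgroup.closure_le]
  intro y hy
  obtain ⟨a, ha, hay⟩ := Group.mem_conjugatesOfSet_iff.1 hy
  obtain ⟨x, rfl⟩ := isConj_iff.1 hay
  exact hJ x (Subgroup.smul_mem_pointwise_smul a (MulAut.conj x) E ha)

theorem commutator_sup_ne_top_of_isSolvable [B.Normal] [Group.IsSolvable (G ⧸ B)] (hB : B ≠ ⊤) :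
    commutator G ⊔ B ≠ ⊤ := by
  intro h
  have : Nontrivial (G ⧸ B) := QuotientGroup.nontrivial_iff.2 hB
  refine (Group.IsSolvable.commutator_lt_top_of_nontrivial (G ⧸ B)).ne ?_
  have hs := QuotientGroup.mk'_surjective B
  rw [commutator_def, ← Subgroup.map_top_of_surjective _ hs, ← Subgroup.map_commutator,
    ← commutator_def, Subgroup.map_eq_map_iff, QuotientGroup.ker_mk', h, top_sup_eq]

theorem IsChiefFactor.commutator_le_of_isSolvable (hAB : IsChiefFactor A B)
    [hA : Group.IsSolvable A] : ⁅A, A⁆ ≤ B := by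
  have := hAB.1
  have := hAB.2.1
  refine (hAB.le_or_sup_eq (Subgroup.commutator_normal A A) A.commutator_le_self).resolve_right
    fun hsup ↦ commutator_sup_ne_top_of_isSolvable (B := B.subgroupOf A)
      (fun h ↦ hAB.2.2.1.not_ge (Subgroup.subgroupOf_eq_top.1 h)) ?_
  refine Subgroup.map_injective A.subtype_injective ?_
  rw [Subgroup.map_sup, Subgroup.map_subtype_commutator,
    Subgroup.map_subgroupOf_eq_of_le hAB.2.2.1.le, hsup, ← MonoidHom.range_eq_map,
    Subgroup.range_subtype]

end Section

/-- `A` is minimal among the nontrivial subgroups normalized by `N`. -/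
def IsMinimalInvariant {G : Type*} [Group G] (N A : Subgroup G) : Prop :=
  Minimal (fun L : Subgroup G ↦ L ≠ ⊥ ∧ N ≤ Subgroup.normalizer L) A

namespace IsMinimalInvariant

variable {G : Type*} [Group G] {N A L : Subgroup G}

theorem conj (h : IsMinimalInvariant N A) (hN : N.Normal) (x : G) :
    IsMinimalInvariant N (MulAut.conj x • A) := by
  have hnorm (y : G) {K : Subgroup G} (hK : N ≤ Subgroup.normalizer K) :
      N ≤ Subgroup.normalizer (MulAut.conj y • K : Subgroup G) := by
    rw [Subgroup.le_normalizer_iff_commutator_le_right] at hK ⊢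
    rw [← hN.conj_smul_eq_self y]
    exact (Subgroup.map_commutator N K _).ge.trans (Subgroup.map_mono hK)
  have hbot (y : G) {K : Subgroup G} (hK : K ≠ ⊥) : MulAut.conj y • K ≠ ⊥ := fun h ↦
    hK ((Subgroup.map_eq_bot_iff_of_injective _ (MulAut.conj y).injective).1 h)
  refine ⟨⟨hbot x h.1.1, hnorm x h.1.2⟩, fun K hK hKA ↦ ?_⟩
  have hinv : (MulAut.conj x)⁻¹ = MulAut.conj x⁻¹ := (map_inv _ _).symm
  rw [Subgroup.subset_pointwise_smul_iff, hinv] at hKA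
  rw [Subgroup.pointwise_smul_subset_iff, hinv]
  exact h.2 ⟨hbot x⁻¹ hK.1, hnorm x⁻¹ hK.2⟩ hKA

theorem le_or_le_centralizer (h : IsMinimalInvariant N A) (hAN : A ≤ N) (hLN : L ≤ N)
    (hL : N ≤ Subgroup.normalizer L) : A ≤ L ∨ A ≤ Subgroup.centralizer L := by
  rcases eq_or_ne (A ⊓ L) ⊥ with hbot | hbot
  · right
    rw [← Subgroup.commutator_eq_bot_iff_le_centralizer, ← le_bot_iff, ← hbot]
    exact le_inf (Subgroup.le_normalizer_iff_commutator_le_left.1 (hLN.trans h.1.2))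
      (Subgroup.le_normalizer_iff_commutator_le_right.1 (hAN.trans hL))
  · left
    have hinv : N ≤ Subgroup.normalizer (A ⊓ L : Subgroup G) := by
      have hA := h.1.2
      rw [Subgroup.le_normalizer_iff_commutator_le_right] at hA hL ⊢
      exact le_inf ((Subgroup.commutator_mono le_rfl inf_le_left).trans hA)
        ((Subgroup.commutator_mono le_rfl inf_le_right).trans hL)
    exact (h.2 ⟨hbot, hinv⟩ inf_le_left).trans inf_le_right

theorem isChiefFactor_subgroupOf (h : IsMinimalInvariant N A) (hAN : A ≤ N) :
    IsChiefFactor (A.subgroupOf N) ⊥ := by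
  refine ⟨Subgroup.normal_subgroupOf_iff_le_normalizer hAN |>.2 h.1.2, inferInstance, ?_,
    fun L hL hbot hLA ↦ hLA.not_ge ?_⟩
  · rw [bot_lt_iff_ne_bot, Ne, Subgroup.subgroupOf_eq_bot, disjoint_iff, inf_eq_left.2 hAN]
    exact h.1.1
  · have hLinv : N ≤ Subgroup.normalizer (L.map N.subtype) := by
      rw [← Subgroup.normal_subgroupOf_iff_le_normalizer (Subgroup.map_subtype_le L),
        Subgroup.subgroupOf, Subgroup.comap_map_eq_self_of_injective N.subtype_injective]
      exact hL
    rw [← Subgroup.map_subtype_le_map_subtype, Subgroup.map_subgroupOf_eq_of_le hAN]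
    refine h.2 ⟨?_, hLinv⟩ (Subgroup.map_le_iff_le_comap.2 hLA.le)
    rw [Ne, Subgroup.map_eq_bot_iff_of_injective _ N.subtype_injective]
    exact hbot.ne'

theorem le_sup_centralizer (h : IsMinimalInvariant N A) (hAN : A ≤ N)
    (hq : IsQuasinilpotentGroup N) : N ≤ A ⊔ Subgroup.centralizer A := by
  intro n hn
  obtain ⟨⟨a, _⟩, ha, hconj⟩ := hq _ _ (h.isChiefFactor_subgroupOf hAN) ⟨n, hn⟩
  refine mem_sup_centralizer.2 ⟨a, ha, Subgroup.mem_centralizer_iff.2 fun l hl ↦ ?_⟩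
  have hnl : n * l * n⁻¹ = a * l * a⁻¹ := congrArg Subtype.val
    (mul_inv_eq_one.1 (Subgroup.mem_bot.1 (hconj ⟨l, hAN hl⟩ hl)))
  calc l * (a⁻¹ * n) = a⁻¹ * (a * l * a⁻¹) * n := by group
    _ = a⁻¹ * n * l := by rw [← hnl]; group

end IsMinimalInvariant

section Quasinilpotent

variable {G : Type*} [Group G]

theorem exists_isMinimalInvariant_le [Finite G] {N A : Subgroup G} (hA : A ≠ ⊥)
    (hN : N ≤ Subgroup.normalizer A) : ∃ L ≤ A, IsMinimalInvariant N L :=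
  (Set.toFinite _).exists_le_minimal (a := A)
    (s := {L : Subgroup G | L ≠ ⊥ ∧ N ≤ Subgroup.normalizer L}) ⟨hA, hN⟩

theorem conj_smul_le_of_normal {A L : Subgroup G} (hA : A.Normal) (hLA : L ≤ A) (x : G) :
    MulAut.conj x • L ≤ A :=
  (Subgroup.pointwise_smul_le_pointwise_smul_iff.2 hLA).trans (hA.conj_smul_eq_self x).le

theorem IsChiefFactor.le_sup_centralizer_of_le_normalizer [Finite G] {A L : Subgroup G}
    (hA : IsChiefFactor A ⊥) (hLA : L ≤ A) (hL : A ≤ Subgroup.normalizer L) :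
    A ≤ L ⊔ Subgroup.centralizer L := by
  obtain ⟨K, hKA, hK⟩ := exists_isMinimalInvariant_le hA.2.2.1.ne' A.le_normalizer
  exact hA.le_of_conj_le hKA hK.1.1 fun x ↦
    ((hK.conj hA.1 x).le_or_le_centralizer (conj_smul_le_of_normal hA.1 hKA x) hLA hL).elim
      le_sup_of_le_left le_sup_of_le_right

theorem le_sup_centralizer_sup {N L K : Subgroup G} (hLN : L ≤ N)
    (hKL : K ≤ Subgroup.centralizer L) (hNL : N ≤ L ⊔ Subgroup.centralizer L)
    (hNK : N ≤ K ⊔ Subgroup.centralizer K) :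
    N ≤ (L ⊔ K) ⊔ Subgroup.centralizer (L ⊔ K : Subgroup G) := by
  intro n hn
  obtain ⟨l, hl, hnl⟩ := mem_sup_centralizer.1 (hNL hn)
  obtain ⟨k, hk, hnk⟩ := mem_sup_centralizer.1 (hNK (N.mul_mem (N.inv_mem (hLN hl)) hn))
  refine mem_sup_centralizer.2 ⟨l * k, Subgroup.mul_mem_sup hl hk, ?_⟩
  rw [mul_inv_rev, mul_assoc]
  have hcent (M : Subgroup G) (hM : k⁻¹ * (l⁻¹ * n) ∈ Subgroup.centralizer M) :
      M ≤ Subgroup.centralizer {k⁻¹ * (l⁻¹ * n)} := fun m hm ↦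
    Subgroup.mem_centralizer_singleton_iff.2 (Subgroup.mem_centralizer_iff.1 hM m hm)
  have hsup := sup_le (hcent L (mul_mem (inv_mem (hKL hk)) hnl)) (hcent K hnk)
  exact Subgroup.mem_centralizer_iff.2 fun m hm ↦
    Subgroup.mem_centralizer_singleton_iff.1 (hsup hm)

-- A maximal `N`-invariant `L ≤ A` on which `N` induces inner automorphisms contains every
-- conjugate of a minimal `N`-invariant subgroup of `A`, hence is `A`.
theorem IsChiefFactor.le_sup_centralizer_of_isQuasinilpotentGroup [Finite G] {N A : Subgroup G}
    (hA : IsChiefFactor A ⊥) (hN : N.Normal) (hq : IsQuasinilpotentGroup N) :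
    N ≤ A ⊔ Subgroup.centralizer A := by
  have hAn := hA.1
  have hAN := hA.le_or_sup_eq (Subgroup.normal_inf_normal N A) inf_le_right
  rw [sup_bot_eq, le_bot_iff, inf_eq_right, ← disjoint_iff] at hAN
  rcases hAN with hdisj | hAN
  · exact le_sup_of_le_right (Subgroup.commutator_eq_bot_iff_le_centralizer.1
      (Subgroup.commutator_eq_bot_of_disjoint hdisj))
  obtain ⟨K, hKA, hK⟩ := exists_isMinimalInvariant_le hA.2.2.1.ne'
    (Subgroup.le_normalizer_of_normal : N ≤ _)
  obtain ⟨L, ⟨hLA, hLN, hinner⟩, hmax⟩ := (Set.toFinite {L : Subgroup G | L ≤ A ∧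
    N ≤ Subgroup.normalizer L ∧ N ≤ L ⊔ Subgroup.centralizer L}).exists_maximal
      ⟨⊥, bot_le, Subgroup.le_normalizer_of_normal,
        le_sup_of_le_right (Subgroup.le_centralizer_iff.1 bot_le)⟩
  have hAL : A ≤ L := hA.le_of_conj_le hKA hK.1.1 fun x ↦ by
    have hxK := hK.conj hN x
    have hxKA := conj_smul_le_of_normal hA.1 hKA x
    refine (hxK.le_or_le_centralizer (hxKA.trans hAN) (hLA.trans hAN) hLN).elim id fun hcomm ↦ ?_
    exact le_sup_right.trans (hmax ⟨sup_le hLA hxKA,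
      (le_inf hLN hxK.1.2).trans (Subgroup.normalizer_inf_normalizer_le_normalizer_sup _ _),
      le_sup_centralizer_sup (hLA.trans hAN) hcomm hinner
        (hxK.le_sup_centralizer (hxKA.trans hAN) hq)⟩ le_sup_left)
  rwa [hLA.antisymm hAL] at hinner

theorem IsQuasinilpotentGroup.of_surjective {G' : Type*} [Group G'] (f : G →* G')
    (hf : Function.Surjective f) (h : IsQuasinilpotentGroup G) : IsQuasinilpotentGroup G' := by
  intro A B hAB x
  obtain ⟨x, rfl⟩ := hf x
  obtain ⟨y, hy, hconj⟩ := h _ _ (hAB.comap hf) x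
  refine ⟨f y, hy, fun z hz ↦ ?_⟩
  obtain ⟨z, rfl⟩ := hf z
  simpa using hconj z hz

/-- Every element of `E` induces an inner automorphism on every chief factor of `G`. -/
def ActsInnerlyOnChiefFactors (E : Subgroup G) : Prop :=
  ∀ (A B : Subgroup G) [B.Normal], IsChiefFactor A B → E ≤ A ⊔ sectionCentralizer B A

theorem ActsInnerlyOnChiefFactors.isQuasinilpotentGroup
    (h : ActsInnerlyOnChiefFactors (⊤ : Subgroup G)) : IsQuasinilpotentGroup G := by
  intro A B hAB x
  have := hAB.1
  have hB := hAB.2.1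
  obtain ⟨a, ha, c, hc, rfl⟩ := Subgroup.mem_sup_of_normal_left.1 (h A B hAB (Subgroup.mem_top x))
  refine ⟨a, ha, fun y hy ↦ ?_⟩
  have hcomm := mem_sectionCentralizer_iff_commutatorElement_mem.1 hc y hy
  convert hB.conj_mem _ hcomm a using 1
  rw [commutatorElement_def]
  group

theorem isQuasinilpotentGroup_of_isNilpotent [Group.IsNilpotent G] : IsQuasinilpotentGroup G := by
  refine ActsInnerlyOnChiefFactors.isQuasinilpotentGroup fun A B _ hAB ↦ ?_
  have hA := hAB.1
  suffices A ≤ sectionCentralizer B ⊤ by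
    rw [le_sectionCentralizer_iff, Subgroup.commutator_comm, ← le_sectionCentralizer_iff] at this
    exact le_sup_of_le_right this
  rw [le_sectionCentralizer_iff]
  refine (hAB.le_or_sup_eq (Subgroup.commutator_normal A ⊤)
    (Subgroup.commutator_le_left A ⊤)).resolve_right fun hsup ↦ ?_
  have hlcs (n : ℕ) : A ≤ (⊤ : Subgroup G).lowerCentralSeries n ⊔ B := by
    induction n with
    | zero => exact le_sup_of_le_left le_top
    | succ n ih =>
      rw [Subgroup.lowerCentralSeries_succ, ← hsup, sup_le_iff, ← le_sectionCentralizer_iff]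
      refine ⟨ih.trans (sup_le (le_sectionCentralizer_iff.2 le_sup_left)
        (le_sectionCentralizer_iff.2 ?_)), le_sup_right⟩
      exact le_sup_of_le_right (Subgroup.commutator_le_left B ⊤)
  obtain ⟨n, hn⟩ := Subgroup.nilpotent_iff_lowerCentralSeries.1 ‹Group.IsNilpotent G›
  exact hAB.2.2.1.not_ge (by simpa [hn] using hlcs n)

theorem IsQuasinilpotentGroup.of_le_center {Z : Subgroup G} [Z.Normal]
    (hZ : Z ≤ Subgroup.center G)
    (h : ∀ L : Subgroup G, L.Normal → L ⊔ sectionCentralizer Z L = ⊤) :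
    IsQuasinilpotentGroup G := by
  refine ActsInnerlyOnChiefFactors.isQuasinilpotentGroup fun A B _ hAB ↦ ?_
  have hA := hAB.1
  rcases hAB.le_or_sup_eq (Subgroup.normal_inf_normal A Z) inf_le_left with hAZ | hAZ
  · have hle : sectionCentralizer Z A ≤ sectionCentralizer B A := le_sectionCentralizer_iff.2
      ((le_inf (Subgroup.commutator_le_right _ _) (le_sectionCentralizer_iff.1 le_rfl)).trans hAZ)
    exact (h A hA).ge.trans (sup_le_sup_left hle A)
  · have hAtop : A ≤ sectionCentralizer B ⊤ := by
      rw [← hAZ]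
      refine sup_le ?_ (le_sectionCentralizer_iff.2 (Subgroup.commutator_le_left B ⊤))
      rw [le_sectionCentralizer_iff,
        Subgroup.commutator_top_right_eq_bot_iff_le_center.2 (inf_le_right.trans hZ)]
      exact bot_le
    rw [le_sectionCentralizer_iff, Subgroup.commutator_comm, ← le_sectionCentralizer_iff] at hAtop
    exact le_sup_of_le_right hAtop

theorem IsChiefFactor.isQuasinilpotentGroup_of_le_centralizer [Finite G] {D Z : Subgroup G}
    (hDZ : IsChiefFactor D Z) (hD : D ≤ Subgroup.centralizer Z) : IsQuasinilpotentGroup D := by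
  have := hDZ.2.1
  refine .of_le_center (Z := Z.subgroupOf D) (fun z hz ↦ ?_) fun L hL ↦ ?_
  · exact Subgroup.mem_center_iff.2 fun d ↦
      Subtype.ext (Subgroup.mem_centralizer_iff.1 (hD d.2) z hz).symm
  have hLD : D ≤ Subgroup.normalizer (L.map D.subtype) := by
    rw [← Subgroup.normal_subgroupOf_iff_le_normalizer (Subgroup.map_subtype_le L),
      Subgroup.subgroupOf, Subgroup.comap_map_eq_self_of_injective D.subtype_injective]
    exact hL
  have hinner := hDZ.map_mk'.le_sup_centralizer_of_le_normalizer
    (Subgroup.map_mono (Subgroup.map_subtype_le L))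
    ((Subgroup.map_mono hLD).trans (Subgroup.le_normalizer_map _))
  refine eq_top_iff.2 fun d _ ↦ ?_
  obtain ⟨_, ⟨_, ⟨l, hl, rfl⟩, rfl⟩, hcent⟩ :=
    mem_sup_centralizer.1 (hinner (Subgroup.mem_map_of_mem _ d.2))
  rw [← mul_inv_cancel_left l d]
  refine Subgroup.mul_mem_sup hl (mem_sectionCentralizer_iff_commutatorElement_mem.2
    fun a ha ↦ Subgroup.mem_subgroupOf.2 ?_)
  have hld : (l⁻¹ * d : G) ∈ sectionCentralizer Z (L.map D.subtype) := hcent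
  exact mem_sectionCentralizer_iff_commutatorElement_mem.1 hld a (Subgroup.mem_map_of_mem _ ha)

end Quasinilpotent

namespace ActsInnerlyOnChiefFactors

variable {G : Type*} [Group G] {E A B : Subgroup G}

theorem commutator_le (hE : ActsInnerlyOnChiefFactors E) (hAB : IsChiefFactor A B)
    [Group.IsSolvable A] : ⁅A, E⁆ ≤ B := by
  have := hAB.2.1
  rw [Subgroup.commutator_comm, ← le_sectionCentralizer_iff]
  exact (hE A B hAB).trans (sup_le (le_sectionCentralizer_iff.2 hAB.commutator_le_of_isSolvable)
    le_rfl)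

theorem isNilpotent [Finite G] (hE : ActsInnerlyOnChiefFactors E) (hn : E.Normal)
    [Group.IsSolvable E] : Group.IsNilpotent E := by
  suffices ∀ B : Subgroup G, B.Normal → B ≤ E → ∃ n, E.lowerCentralSeries n ≤ B by
    obtain ⟨n, h⟩ := this ⊥ inferInstance bot_le
    exact (Subgroup.isNilpotent_iff_lowerCentralSeries E).2 ⟨n, le_bot_iff.1 h⟩
  intro B
  induction B using WellFoundedGT.induction with
  | ind B ih =>
    intro hB hBE
    obtain rfl | hlt := hBE.eq_or_lt
    · exact ⟨0, le_rfl⟩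
    obtain ⟨A, hAB, hAE⟩ := IsChiefFactor.exists_le hB hn hlt
    obtain ⟨n, hA⟩ := ih A hAB.2.2.1 hAB.1 hAE
    have : Group.IsSolvable A :=
      Group.isSolvable_of_isSolvable_injective (Subgroup.inclusion_injective hAE)
    refine ⟨n + 1, ?_⟩
    rw [Subgroup.lowerCentralSeries_succ]
    exact (Subgroup.commutator_mono hA le_rfl).trans (hE.commutator_le hAB)

end ActsInnerlyOnChiefFactors

section Simple

variable {G : Type*} [Group G]

theorem isSolvable_of_commutator_le {A B : Subgroup G} (h : ⁅A, A⁆ ≤ B) [Group.IsSolvable B] :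
    Group.IsSolvable A := by
  have hmap : (commutator A).map A.subtype ≤ B := by rwa [Subgroup.map_subtype_commutator]
  have : Group.IsSolvable (commutator A) := Group.isSolvable_of_isSolvable_injective
    (f := (Subgroup.inclusion hmap).comp (A.subtype.subgroupMap (commutator A)))
    ((Subgroup.inclusion_injective hmap).comp
      ((commutator A).equivMapOfInjective _ A.subtype_injective).injective)
  exact (Group.isSolvable_iff_subgroup_quotient (commutator A)).2
    ⟨this, inferInstanceAs (Group.IsSolvable (Abelianization A))⟩

-- For `B` maximal among the solvable normal subgroups of `G` in `E`, a chief factor `A / B` in `E`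
-- is perfect, and `E` is the product of `A` and the subgroup `W` centralizing `A / B`.
theorem ActsInnerlyOnChiefFactors.exists_commutator_sup_eq_top [Finite G] {E : Subgroup G}
    (hE : ActsInnerlyOnChiefFactors E) (hn : E.Normal) (hs : ¬ Group.IsSolvable E) :
    ∃ W : Subgroup E, W.Normal ∧ W ≠ ⊤ ∧ commutator E ⊔ W = ⊤ := by
  obtain ⟨B, ⟨hB, hBE, hBs⟩, hmax⟩ := wellFounded_gt.has_min {B : Subgroup G | B.Normal ∧ B ≤ E ∧
    Group.IsSolvable B} ⟨⊥, inferInstance, bot_le, inferInstance⟩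
  obtain ⟨A, hAB, hAE⟩ := IsChiefFactor.exists_le hB hn (hBE.lt_of_ne (by rintro rfl; exact hs hBs))
  have := hAB.1
  have hcomm : ¬ ⁅A, A⁆ ≤ B := fun h ↦
    hmax A ⟨hAB.1, hAE, isSolvable_of_commutator_le h⟩ hAB.2.2.1
  have hperfect : ⁅A, A⁆ ⊔ B = A :=
    (hAB.le_or_sup_eq (Subgroup.commutator_normal A A) A.commutator_le_self).resolve_left hcomm
  refine ⟨(sectionCentralizer B A).subgroupOf E, inferInstance, fun htop ↦ hcomm ?_, ?_⟩
  · exact le_sectionCentralizer_iff.1 (hAE.trans (Subgroup.subgroupOf_eq_top.1 htop))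
  · have hEC : E ≤ ⁅E, E⁆ ⊔ sectionCentralizer B A := by
      refine (hE A B hAB).trans (sup_le ?_ le_sup_right)
      rw [← hperfect]
      exact sup_le_sup (Subgroup.commutator_mono hAE hAE)
        (le_sectionCentralizer_iff.2 (Subgroup.commutator_le_left B _))
    refine eq_top_iff.2 fun e _ ↦ ?_
    obtain ⟨d, hd, c, hc, hdc⟩ := Subgroup.mem_sup_of_normal_left.1 (hEC e.2)
    rw [← Subgroup.map_subtype_commutator] at hd
    obtain ⟨d, hdE, rfl⟩ := hd
    exact Subgroup.mem_sup_of_normal_left.2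
      ⟨d, hdE, d⁻¹ * e, Subgroup.mem_subgroupOf.2 (by simpa [← hdc] using hc), by group⟩

theorem exists_normal_le_isSimpleGroup_quotient [Finite G] {W : Subgroup G} (hW : W.Normal)
    (hne : W ≠ ⊤) : ∃ Y : Subgroup G, ∃ _ : Y.Normal, W ≤ Y ∧ IsSimpleGroup (G ⧸ Y) := by
  obtain ⟨Y, ⟨hY, hWY, hYne⟩, hmax⟩ := wellFounded_gt.has_min
    {Y : Subgroup G | Y.Normal ∧ W ≤ Y ∧ Y ≠ ⊤} ⟨W, hW, le_rfl, hne⟩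
  have : Nontrivial (G ⧸ Y) := QuotientGroup.nontrivial_iff.2 hYne
  refine ⟨Y, hY, hWY, ⟨fun L hL ↦ ?_⟩⟩
  have hs := QuotientGroup.mk'_surjective Y
  have hYL : Y ≤ L.comap (QuotientGroup.mk' Y) := QuotientGroup.le_comap_mk' Y L
  by_cases htop : L.comap (QuotientGroup.mk' Y) = ⊤
  · right
    rw [← Subgroup.map_comap_eq_self_of_surjective hs L, htop, Subgroup.map_top_of_surjective _ hs]
  · left
    rw [← Subgroup.map_comap_eq_self_of_surjective hs L,
      ← hYL.eq_of_not_lt (hmax _ ⟨hL.comap _, hWY.trans hYL, htop⟩), QuotientGroup.map_mk'_self]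

theorem ActsInnerlyOnChiefFactors.exists_isSimpleGroup_quotient [Finite G] {E : Subgroup G}
    (hE : ActsInnerlyOnChiefFactors E) (hn : E.Normal) (hs : ¬ Group.IsSolvable E) :
    ∃ Y : Subgroup E, ∃ _ : Y.Normal, IsSimpleGroup (E ⧸ Y) ∧ ¬ Group.IsSolvable (E ⧸ Y) := by
  obtain ⟨W, hW, hne, hsup⟩ := hE.exists_commutator_sup_eq_top hn hs
  obtain ⟨Y, hY, hWY, hsimple⟩ := exists_normal_le_isSimpleGroup_quotient hW hne
  refine ⟨Y, hY, hsimple, fun h ↦ commutator_sup_ne_top_of_isSolvable (B := Y)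
    (QuotientGroup.nontrivial_iff.1 inferInstance) ?_⟩
  exact top_le_iff.1 (hsup.ge.trans (sup_le_sup_left hWY _))

end Simple

section GeneralizedFitting

variable {G : Type*} [Group G]

theorem le_generalizedFitting {N : Subgroup G} (hN : N.Normal) (hq : IsQuasinilpotentGroup N) :
    N ≤ generalizedFitting G :=
  le_sSup (a := N) (s := {N : Subgroup G | N.Normal ∧ IsQuasinilpotentGroup N}) ⟨hN, hq⟩

instance generalizedFitting_characteristic : (generalizedFitting G).Characteristic :=
  Subgroup.characteristic_iff_le_comap.2 fun e ↦ sSup_le fun N ⟨hN, hq⟩ ↦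
    Subgroup.map_le_iff_le_comap.1 <| le_generalizedFitting (hN.map _ e.surjective) <|
      hq.of_surjective (e.toMonoidHom.subgroupMap N) (MonoidHom.subgroupMap_surjective _ _)

variable [Finite G]

theorem actsInnerlyOnChiefFactors_generalizedFitting :
    ActsInnerlyOnChiefFactors (generalizedFitting G) := by
  intro A B _ hAB
  refine sSup_le fun N ⟨hN, hq⟩ ↦ le_sup_sectionCentralizer hAB.2.2.1.le ?_
  exact hAB.map_mk'.le_sup_centralizer_of_isQuasinilpotentGroup
    (hN.map _ (QuotientGroup.mk'_surjective B)) <|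
      hq.of_surjective ((QuotientGroup.mk' B).subgroupMap N) (MonoidHom.subgroupMap_surjective _ _)

theorem centralizer_generalizedFitting_le :
    Subgroup.centralizer (generalizedFitting G : Set G) ≤ generalizedFitting G := by
  by_contra hle
  obtain ⟨D, hD, hDC⟩ := IsChiefFactor.exists_le
    (Subgroup.normal_inf_normal (Subgroup.centralizer (generalizedFitting G : Set G))
      (generalizedFitting G)) inferInstance (inf_lt_left.2 hle)
  refine hD.2.2.1.not_ge (le_inf hDC (le_generalizedFitting hD.1 ?_))
  exact hD.isQuasinilpotentGroup_of_le_centralizer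
    (hDC.trans (Subgroup.centralizer_le inf_le_right))

end GeneralizedFitting

section FStarIn

variable {G : Type u} [Group G] {H : Subgroup G}

instance fStarIn_normal [H.Normal] : (FStarIn H).Normal :=
  ConjAct.normal_of_characteristic_of_normal

/-- The generalized Fitting subgroup of `H`, seen in `H` and in the ambient group. -/
noncomputable def generalizedFittingEquivFStarIn (H : Subgroup G) :
    generalizedFitting H ≃* FStarIn H :=
  (generalizedFitting H).equivMapOfInjective H.subtype H.subtype_injective

theorem le_fStarIn_of_isNilpotent {K : Subgroup G} [K.Normal] (hKH : K ≤ H)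
    [Group.IsNilpotent K] : K ≤ FStarIn H := by
  have : Group.IsNilpotent (K.subgroupOf H) :=
    Group.nilpotent_of_mulEquiv (Subgroup.subgroupOfEquivOfLe hKH).symm
  have hle := le_generalizedFitting (N := K.subgroupOf H) inferInstance
    isQuasinilpotentGroup_of_isNilpotent
  rw [← Subgroup.map_subgroupOf_eq_of_le hKH]
  exact Subgroup.map_mono hle

variable [Finite G]

theorem isNilpotent_fStarIn [hs : Group.IsSolvable (FStarIn H)] :
    Group.IsNilpotent (FStarIn H) := by
  let e := generalizedFittingEquivFStarIn H
  have : Group.IsSolvable (generalizedFitting H) :=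
    Group.isSolvable_of_isSolvable_injective (f := e.toMonoidHom) e.injective
  have := actsInnerlyOnChiefFactors_generalizedFitting (G := H) |>.isNilpotent inferInstance
  exact Group.nilpotent_of_mulEquiv e

theorem exists_isSimpleGroup_of_not_isSolvable_fStarIn (hs : ¬ Group.IsSolvable (FStarIn H)) :
    ∃ (S : Type u) (_ : Group S) (φ : FStarIn H →* S), Function.Surjective φ ∧ IsSimpleGroup S ∧
      ¬ Group.IsSolvable S := by
  let e := generalizedFittingEquivFStarIn H
  obtain ⟨Y, hY, hsimple, hnonsolv⟩ :=
    (actsInnerlyOnChiefFactors_generalizedFitting (G := H)).exists_isSimpleGroup_quotient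
      inferInstance fun h ↦ hs (Group.isSolvable_of_surjective (f := e.toMonoidHom) e.surjective)
  exact ⟨_ ⧸ Y, inferInstance, (QuotientGroup.mk' Y).comp e.symm.toMonoidHom,
    (QuotientGroup.mk'_surjective Y).comp e.symm.surjective, hsimple, hnonsolv⟩

theorem inf_centralizer_fStarIn_le : H ⊓ Subgroup.centralizer (FStarIn H : Set G) ≤ FStarIn H :=
  fun x ⟨hxH, hx⟩ ↦ ⟨⟨x, hxH⟩, centralizer_generalizedFitting_le <|
    Subgroup.mem_centralizer_iff.2 fun f hf ↦
      Subtype.ext (Subgroup.mem_centralizer_iff.1 hx f ⟨f, hf, rfl⟩), rfl⟩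

end FStarIn

section Permutability

variable {G : Type*} [Group G]

theorem coe_sup_of_mul_comm {A B : Subgroup G} (h : (A : Set G) * B = B * A) :
    ((A ⊔ B : Subgroup G) : Set G) = A * B := by
  let AB : Subgroup G :=
    { carrier := A * B
      one_mem' := ⟨1, one_mem A, 1, one_mem B, one_mul 1⟩
      mul_mem' := fun {x y} hx hy ↦ by
        have : x * y ∈ (A * B * (A * B) : Set G) := Set.mul_mem_mul hx hy
        rwa [mul_assoc, ← mul_assoc (B : Set G), ← h, mul_assoc, coe_mul_coe, ← mul_assoc,
          coe_mul_coe] at this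
      inv_mem' := fun {x} hx ↦ by
        rw [← Set.mem_inv, mul_inv_rev, inv_coe_set, inv_coe_set]
        exact h ▸ hx }
  refine subset_antisymm ?_ (Set.mul_subset_iff.2 fun a ha b hb ↦ Subgroup.mul_mem_sup ha hb)
  exact sup_le (c := AB) (fun a ha ↦ ⟨a, ha, 1, one_mem B, mul_one a⟩)
    fun b hb ↦ ⟨1, one_mem A, b, hb, one_mul b⟩

theorem relIndex_eq_of_coe_eq_mul {K M R : Subgroup G} (hR : (R : Set G) = M * K) :
    K.relIndex R = K.relIndex M := by
  have hMR : M ≤ R := fun m hm ↦ by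
    rw [← SetLike.mem_coe, hR]
    exact ⟨m, hm, 1, one_mem K, mul_one m⟩
  refine (Nat.card_eq_of_bijective (Subgroup.quotientSubgroupOfEmbeddingOfLE K hMR)
    ⟨(Subgroup.quotientSubgroupOfEmbeddingOfLE K hMR).injective, fun r ↦ ?_⟩).symm
  induction r using QuotientGroup.induction_on with
  | H r =>
    obtain ⟨m, hm, k, hk, hmk⟩ := hR.subset r.2
    refine ⟨QuotientGroup.mk ⟨m, hm⟩, ?_⟩
    rw [Subgroup.quotientSubgroupOfEmbeddingOfLE_apply_mk, QuotientGroup.eq,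
      Subgroup.mem_subgroupOf]
    simpa [← hmk] using hk

theorem le_of_isPGroup_of_not_dvd_relIndex [Finite G] {p : ℕ} (hp : p.Prime) {M K : Subgroup G}
    (hM : IsPGroup p M) (h : ¬ p ∣ K.relIndex M) : M ≤ K := by
  have := Fact.mk hp
  obtain ⟨n, hn⟩ := hM.index (K.subgroupOf M)
  rw [Subgroup.relIndex, hn] at h
  obtain rfl : n = 0 := by_contra fun hn0 ↦ h (dvd_pow_self p hn0)
  exact Subgroup.relIndex_eq_one.1 (hn.trans (pow_zero p))

namespace IsSylowIn

variable {p : ℕ} {Q : Subgroup G}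

theorem exists_of_prime [Finite G] (hp : p.Prime) (E : Subgroup G) : ∃ P, IsSylowIn p P E := by
  have := Fact.mk hp
  obtain ⟨P⟩ := (inferInstance : Nonempty (Sylow p E))
  refine ⟨(P : Subgroup E).map E.subtype, Subgroup.map_subtype_le _, P.2.map _, ?_⟩
  rw [Subgroup.subgroupOf, Subgroup.comap_map_eq_self_of_injective E.subtype_injective]
  exact P.not_dvd_index

theorem not_dvd_index (hQ : IsSylowIn p Q ⊤) : ¬ p ∣ Q.index := by
  have := hQ.2.2
  rwa [← Subgroup.relIndex, Subgroup.relIndex_top_right] at this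

theorem map_conj (hQ : IsSylowIn p Q ⊤) (g : G) :
    IsSylowIn p (Q.map (MulAut.conj g).toMonoidHom) ⊤ := by
  refine ⟨le_top, hQ.2.1.map _, ?_⟩
  rw [← Subgroup.relIndex, Subgroup.relIndex_top_right]
  exact fun h ↦ hQ.not_dvd_index (h.trans (Q.index_map_dvd (MulAut.conj g).surjective))

end IsSylowIn

variable [Finite G] {p : ℕ} {M T Q : Subgroup G}

-- The index of `T ⊔ Q` in `M ⊔ T ⊔ Q = M(TQ)` divides both `|M|` and `|G : Q|`.
theorem SPermutable.le_sup (hs : SPermutable (M ⊔ T)) (hp : p.Prime) (hM : IsPGroup p M)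
    (hT : T.Normal) (hQ : IsSylowIn p Q ⊤) : M ≤ T ⊔ Q := by
  have hmul : ((M ⊔ T ⊔ Q : Subgroup G) : Set G) = M * (T ⊔ Q : Subgroup G) := by
    rw [coe_sup_of_mul_comm (hs p hp Q hQ), Subgroup.mul_normal, Subgroup.normal_mul, mul_assoc]
  refine le_of_isPGroup_of_not_dvd_relIndex hp hM fun hdvd ↦ hQ.not_dvd_index ?_
  rw [← relIndex_eq_of_coe_eq_mul hmul] at hdvd
  calc p ∣ (T ⊔ Q).relIndex (M ⊔ T ⊔ Q) := hdvd
    _ ∣ (T ⊔ Q).index := Subgroup.relIndex_dvd_index_of_le (sup_le_sup_right le_sup_right Q)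
    _ ∣ Q.index := Subgroup.index_dvd_of_le le_sup_right

theorem SPermutable.le_normalCore_sup (hs : SPermutable (M ⊔ T)) (hp : p.Prime)
    (hM : IsPGroup p M) (hT : T.Normal) (hQ : IsSylowIn p Q ⊤) : M ≤ (T ⊔ Q).normalCore := by
  intro m hm g
  have hmem := hs.le_sup hp hM hT (hQ.map_conj g⁻¹) hm
  rw [Subgroup.mem_sup_of_normal_left] at hmem
  obtain ⟨t, ht, _, ⟨q, hq, rfl⟩, rfl⟩ := hmem
  convert Subgroup.mul_mem_sup (hT.conj_mem t ht g) hq using 1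
  simp only [MulEquiv.toMonoidHom_eq_coe, MonoidHom.coe_coe, MulAut.conj_apply]
  group

end Permutability

namespace IsMaximalIn

variable {G : Type*} [Group G] {L M P : Subgroup G}

theorem exists_ge [Finite G] (h : L < P) : ∃ M, L ≤ M ∧ IsMaximalIn M P := by
  obtain ⟨M, ⟨hLM, hMP⟩, hmax⟩ :=
    wellFounded_gt.has_min {M : Subgroup G | L ≤ M ∧ M < P} ⟨L, le_rfl, h⟩
  exact ⟨M, hLM, hMP, fun K hMK hKP ↦ hKP.eq_of_not_lt fun hlt ↦ hmax K ⟨hLM.trans hMK.le, hlt⟩ hMK⟩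

theorem isCoatom_subgroupOf (hM : IsMaximalIn M P) : IsCoatom (M.subgroupOf P) := by
  refine ⟨fun h ↦ hM.1.not_ge (Subgroup.subgroupOf_eq_top.1 h), fun K hK ↦ ?_⟩
  have hlt := (Subgroup.map_lt_map_iff_of_injective P.subtype_injective).2 hK
  rw [Subgroup.map_subgroupOf_eq_of_le hM.1.le] at hlt
  refine Subgroup.map_injective P.subtype_injective ?_
  rw [hM.2 _ hlt (Subgroup.map_subtype_le K), ← MonoidHom.range_eq_map, Subgroup.range_subtype]

theorem of_isCoatom {M : Subgroup P} (hM : IsCoatom M) : IsMaximalIn (M.map P.subtype) P := by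
  have hlt : M.map P.subtype < (⊤ : Subgroup P).map P.subtype :=
    (Subgroup.map_lt_map_iff_of_injective P.subtype_injective).2 hM.lt_top
  rw [← MonoidHom.range_eq_map, Subgroup.range_subtype] at hlt
  refine ⟨hlt, fun L hML hLP ↦ ?_⟩
  rw [← Subgroup.map_subgroupOf_eq_of_le hLP,
    Subgroup.map_lt_map_iff_of_injective P.subtype_injective] at hML
  exact hLP.antisymm (Subgroup.subgroupOf_eq_top.1 (hM.2 _ hML))

theorem normal_subgroupOf [Group.IsNilpotent P] (hM : IsMaximalIn M P) :
    (M.subgroupOf P).Normal :=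
  Subgroup.NormalizerCondition.normal_of_coatom _ Group.normalizerCondition_of_isNilpotent
    hM.isCoatom_subgroupOf

theorem exists_eq_mul_zpow [Group.IsNilpotent P] (hM : IsMaximalIn M P) {x : G} (hx : x ∈ P)
    (hxM : x ∉ M) {y : G} (hy : y ∈ P) : ∃ m ∈ M, ∃ k : ℤ, y = m * x ^ k := by
  have := hM.normal_subgroupOf
  have hlt : M.subgroupOf P < M.subgroupOf P ⊔ Subgroup.zpowers ⟨x, hx⟩ :=
    lt_of_le_of_ne le_sup_left fun h ↦ hxM <| Subgroup.mem_subgroupOf (h := ⟨x, hx⟩).1 <|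
      h ▸ Subgroup.mem_sup_right (Subgroup.mem_zpowers _)
  have hmem : (⟨y, hy⟩ : P) ∈ M.subgroupOf P ⊔ Subgroup.zpowers ⟨x, hx⟩ :=
    hM.isCoatom_subgroupOf.2 _ hlt ▸ Subgroup.mem_top _
  rw [Subgroup.mem_sup_of_normal_left] at hmem
  obtain ⟨m, hm, _, ⟨k, rfl⟩, hmk⟩ := hmem
  exact ⟨m, hm, k, (congrArg Subtype.val hmk).symm⟩

end IsMaximalIn

section LargestPrime

variable {G : Type*} [Group G] [Finite G] {q : ℕ}

theorem subsingleton_sylow_of_card_eq [Fact q.Prime] {m k : ℕ} (hG : Nat.card G = m * q ^ k)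
    (hm : m < q) : Subsingleton (Sylow q G) := by
  have hm0 : m ≠ 0 := by
    rintro rfl
    exact Nat.card_pos.ne' (hG.trans (zero_mul _))
  obtain ⟨Q⟩ := (inferInstance : Nonempty (Sylow q G))
  have hdvd : Nat.card (Sylow q G) ∣ m := by
    refine Nat.Coprime.dvd_of_dvd_mul_right (k := Nat.card (Sylow q G)) (n := q ^ k) ?_ ?_
    · exact Nat.Coprime.pow_right k
        ((Nat.Prime.coprime_iff_not_dvd Fact.out).2 (not_dvd_card_sylow q G)).symm
    · exact hG ▸ Q.card_dvd_index.trans (Subgroup.index_dvd_card _)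
  have hlt : Nat.card (Sylow q G) < q :=
    (Nat.le_of_dvd (Nat.pos_of_ne_zero hm0) hdvd).trans_lt hm
  exact (Nat.card_eq_one_iff_unique.1 <| Nat.ModEq.eq_of_lt_of_lt (card_sylow_modEq_one q G) hlt
    (Nat.Prime.one_lt Fact.out)).1

theorem exists_normal_isSylowIn_of_card_eq (hq : q.Prime) {N : Subgroup G} (hN : N.Normal)
    {m k : ℕ} (hcard : Nat.card N = m * q ^ k) (hm : m < q) :
    ∃ Q : Subgroup G, Q.Normal ∧ IsSylowIn q Q N := by
  have := Fact.mk hq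
  have := subsingleton_sylow_of_card_eq hcard hm
  obtain ⟨Q⟩ := (inferInstance : Nonempty (Sylow q N))
  refine ⟨(Q : Subgroup N).map N.subtype, ConjAct.normal_of_characteristic_of_normal,
    Subgroup.map_subtype_le _, Q.2.map _, ?_⟩
  rw [Subgroup.subgroupOf, Subgroup.comap_map_eq_self_of_injective N.subtype_injective]
  exact Q.not_dvd_index

theorem IsPrimeSection.exists_isSylow_quotient (hq : q.Prime) {B C K : Subgroup G}
    (hBC : IsPrimeSection B C) (hle : B.relIndex C ≤ q) (hK : K.Normal) (hCK : C ≤ K)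
    (hKq : ∃ k, C.relIndex K = q ^ k) (hKi : ¬ q ∣ K.index) :
    ∃ K' : Subgroup G, K'.Normal ∧ B ≤ K' ∧ (∃ k, B.relIndex K' = q ^ k) ∧ ¬ q ∣ K'.index := by
  obtain ⟨k, hk⟩ := hKq
  have := hBC.normal_left
  have := Fact.mk hq
  have hBK : B.relIndex K = B.relIndex C * q ^ k :=
    hk ▸ (Subgroup.relIndex_mul_relIndex B C K hBC.le hCK).symm
  obtain heq | hlt := hle.eq_or_lt
  · exact ⟨K, hK, hBC.le.trans hCK, ⟨k + 1, by rw [hBK, heq, pow_succ']⟩, hKi⟩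
  have hmap : ∀ L : Subgroup G, Nat.card (L.map (QuotientGroup.mk' B)) = B.relIndex L := fun L ↦ by
    rw [← Subgroup.relIndex_ker, QuotientGroup.ker_mk']
  have hsurj := QuotientGroup.mk'_surjective B
  obtain ⟨Q, hQ, hQK⟩ := exists_normal_isSylowIn_of_card_eq hq (hK.map _ hsurj)
    ((hmap K).trans hBK) hlt
  obtain ⟨j, hj⟩ := IsPGroup.iff_card.1 hQK.2.1
  refine ⟨Q.comap (QuotientGroup.mk' B), hQ.comap _, QuotientGroup.le_comap_mk' B Q, ⟨j, ?_⟩, ?_⟩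
  · rw [← hmap, Subgroup.map_comap_eq_self_of_surjective hsurj, hj]
  · rw [Subgroup.index_comap_of_surjective Q hsurj, ← Subgroup.relIndex_mul_index hQK.1,
      hq.dvd_mul]
    exact fun h ↦ h.elim hQK.2.2 fun h ↦ hKi (h.trans (K.index_map_dvd hsurj))

theorem IsSupersoluble.exists_normal_isSylowIn (hG : IsSupersoluble G) (hq : q.Prime)
    (hmax : ∀ r : ℕ, r.Prime → r ∣ Nat.card G → r ≤ q) :
    ∃ Q : Subgroup G, Q.Normal ∧ IsSylowIn q Q ⊤ := by
  suffices ∃ K : Subgroup G, K.Normal ∧ ⊥ ≤ K ∧ (∃ k, (⊥ : Subgroup G).relIndex K = q ^ k) ∧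
      ¬ q ∣ K.index by
    obtain ⟨K, hK, -, ⟨k, hk⟩, hKi⟩ := this
    have := Fact.mk hq
    rw [← Subgroup.relIndex_top_right] at hKi
    exact ⟨K, hK, le_top, IsPGroup.iff_card.2 ⟨k, by rw [← hk, Subgroup.relIndex_bot_left]⟩, hKi⟩
  refine (isSupersoluble_iff_uHypercentral.1 hG).head_induction_on
    ⟨⊤, inferInstance, le_rfl, ⟨0, by simp⟩, by simpa using hq.one_lt.ne'⟩ ?_
  rintro B C hBC - ⟨K, hK, hCK, hKq, hKi⟩
  refine hBC.exists_isSylow_quotient hq (hmax _ hBC.prime_relIndex ?_) hK hCK hKq hKi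
  exact (Subgroup.relIndex_dvd_card B C).trans (Subgroup.card_subgroup_dvd_card C)

theorem IsSupersoluble.of_injective {G' : Type*} [Group G'] [Finite G'] {f : G' →* G}
    (hf : Function.Injective f) (hG : IsSupersoluble G) : IsSupersoluble G' := by
  have := (isSupersoluble_iff_uHypercentral.1 hG).comap f
  rw [MonoidHom.comap_bot, (MonoidHom.ker_eq_bot_iff f).2 hf, Subgroup.comap_top] at this
  exact isSupersoluble_iff_uHypercentral.2 this

theorem IsSupersoluble.of_surjective {G' : Type*} [Group G'] [Finite G'] {f : G →* G'}
    (hf : Function.Surjective f) (hG : IsSupersoluble G) : IsSupersoluble G' := by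
  have := (isSupersoluble_iff_uHypercentral.1 hG).map hf
  rw [Subgroup.map_bot, Subgroup.map_top_of_surjective f hf] at this
  exact isSupersoluble_iff_uHypercentral.2 this

end LargestPrime

section SimpleGroup

theorem isSolvable_of_isSolvable_top {G : Type*} [Group G]
    [Group.IsSolvable (⊤ : Subgroup G)] : Group.IsSolvable G :=
  Group.isSolvable_of_surjective (f := (Subgroup.topEquiv (G := G)).toMonoidHom)
    Subgroup.topEquiv.surjective

theorem not_isPGroup_of_not_isSolvable {G : Type*} [Group G] [Finite G] (hG : ¬ Group.IsSolvable G)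
    {p : ℕ} (hp : p.Prime) : ¬ IsPGroup p G := fun h ↦ by
  have := Fact.mk hp
  have := h.isNilpotent
  exact hG inferInstance

theorem minFac_card_prime (G : Type*) [Finite G] [Nontrivial G] :
    (Nat.card G).minFac.Prime :=
  Nat.minFac_prime Finite.one_lt_card.ne'

theorem not_isCyclic_of_not_dvd_index {S : Type*} [Group S] [Finite S] [IsSimpleGroup S]
    (hS : ¬ Group.IsSolvable S) {Q : Subgroup S} (hQ : IsPGroup (Nat.card S).minFac Q)
    (hi : ¬ (Nat.card S).minFac ∣ Q.index) :
    ¬ IsCyclic Q := by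
  intro hc
  have := Fact.mk (minFac_card_prime S)
  have hc' : IsCyclic (hQ.toSylow hi : Subgroup S) := hc
  have hcompl : Subgroup.IsComplement' _ Q := IsCyclic.isComplement' rfl hc'
  obtain h | h := (MonoidHom.normal_ker (MonoidHom.transferSylow (hQ.toSylow hi)
    (hc'.normalizer_le_centralizer rfl))).eq_bot_or_eq_top
  · rw [h, Subgroup.isComplement'_bot_left] at hcompl
    subst hcompl
    let := hc.commGroup
    exact hS isSolvable_of_isSolvable_top
  · rw [h, Subgroup.isComplement'_top_left] at hcompl
    rw [hcompl, Subgroup.index_bot] at hi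
    exact hi (Nat.minFac_dvd _)

end SimpleGroup

/-- The partial image of `X` under a homomorphism defined on `E` only: the image of `X ⊓ E`. -/
def partialMap {G S : Type*} [Group G] [Group S] {E : Subgroup G} (φ : E →* S) (X : Subgroup G) :
    Subgroup S :=
  (X.subgroupOf E).map φ

section PartialMap

variable {G S : Type*} [Group G] [Group S] {E : Subgroup G} {φ : E →* S} {X Y : Subgroup G}

theorem apply_mem_partialMap {x : E} (hx : (x : G) ∈ X) : φ x ∈ partialMap φ X := ⟨x, hx, rfl⟩

theorem partialMap_mono (φ : E →* S) (h : X ≤ Y) : partialMap φ X ≤ partialMap φ Y :=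
  Subgroup.map_mono (Subgroup.comap_mono h)

theorem partialMap_top (hφ : Function.Surjective φ) : partialMap φ ⊤ = ⊤ := by
  rw [partialMap, Subgroup.top_subgroupOf, Subgroup.map_top_of_surjective φ hφ]

theorem partialMap_normal (hφ : Function.Surjective φ) (hX : X.Normal) : (partialMap φ X).Normal :=
  (hX.comap E.subtype).map φ hφ

theorem subgroupComap_subtype_injective (E X : Subgroup G) :
    Function.Injective (E.subtype.subgroupComap X) := fun _ _ h ↦
  Subtype.ext (E.subtype_injective (congrArg (Subtype.val : X → G) h))

theorem isSolvable_partialMap (φ : E →* S) (hX : Group.IsSolvable X) :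
    Group.IsSolvable (partialMap φ X) := by
  have : Group.IsSolvable (X.subgroupOf E) :=
    Group.isSolvable_of_isSolvable_injective (subgroupComap_subtype_injective E X)
  exact Group.isSolvable_of_surjective (φ.subgroupMap_surjective (X.subgroupOf E))

theorem isSupersoluble_partialMap [Finite G] [Finite S] (φ : E →* S) (hX : IsSupersoluble X) :
    IsSupersoluble (partialMap φ X) :=
  IsSupersoluble.of_surjective (φ.subgroupMap_surjective (X.subgroupOf E)) <|
    hX.of_injective (subgroupComap_subtype_injective E X)

theorem isPGroup_partialMap (φ : E →* S) {p : ℕ} (hX : IsPGroup p X) :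
    IsPGroup p (partialMap φ X) :=
  (hX.comap_of_injective E.subtype E.subtype_injective).map φ

theorem isPGroup_partialMap_of_le_sup {p : ℕ} {T Q O : Subgroup G} (hT : T.Normal)
    (hTφ : partialMap φ T = ⊥) (hQ : IsPGroup p Q) (hO : O ≤ T ⊔ Q) :
    IsPGroup p (partialMap φ O) := by
  rintro ⟨_, y, hy, rfl⟩
  have hyTQ := hO hy
  rw [Subgroup.mem_sup_of_normal_left] at hyTQ
  obtain ⟨t, ht, z, hz, htz : t * z = y⟩ := hyTQ
  obtain ⟨k, hk⟩ := hQ ⟨z, hz⟩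
  have hypow : (y : G) ^ p ^ k ∈ T := by
    rw [← QuotientGroup.eq_one_iff, QuotientGroup.mk_pow, ← htz, QuotientGroup.mk_mul,
      (QuotientGroup.eq_one_iff t).2 ht, one_mul, ← QuotientGroup.mk_pow,
      show z ^ p ^ k = 1 from congrArg Subtype.val hk, QuotientGroup.mk_one]
  have hφy : φ (y ^ p ^ k) ∈ partialMap φ T := apply_mem_partialMap hypow
  rw [hTφ, map_pow] at hφy
  exact ⟨k, Subtype.ext hφy⟩

theorem partialMap_mul_partialMap_eq_univ {M T : Subgroup G} (hφ : Function.Surjective φ)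
    (hME : M ≤ E) (hMT : (M : Set G) * (T : Set G) = Set.univ) :
    (partialMap φ M : Set S) * (partialMap φ T : Set S) = Set.univ := by
  refine Set.eq_univ_of_forall fun s ↦ ?_
  obtain ⟨e, rfl⟩ := hφ s
  obtain ⟨m, hm, t, ht, hmt : m * t = e⟩ := hMT.symm.subset (Set.mem_univ (e : G))
  have hte : t ∈ E := (E.mul_mem_cancel_left (hME hm)).1 (hmt.symm ▸ e.2)
  refine ⟨φ ⟨m, hME hm⟩, apply_mem_partialMap hm, φ ⟨t, hte⟩, apply_mem_partialMap ht, ?_⟩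
  exact (map_mul φ _ _).symm.trans (congrArg φ (Subtype.ext hmt))

theorem not_dvd_index_partialMap_inf {p : ℕ} {P T : Subgroup G} (hP : IsSylowIn p P E)
    (hT : T.Normal) (hTφ : partialMap φ T = ⊤) : ¬ p ∣ (partialMap φ (P ⊓ T)).index := by
  have hsurj : Function.Surjective (φ.comp (T.subgroupOf E).subtype) := fun s ↦ by
    obtain ⟨y, hy, rfl⟩ := hTφ.symm.le (Subgroup.mem_top s)
    exact ⟨⟨y, hy⟩, rfl⟩
  have hmap : ((P.subgroupOf E).subgroupOf (T.subgroupOf E)).map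
      (φ.comp (T.subgroupOf E).subtype) = partialMap φ (P ⊓ T) := by
    rw [← Subgroup.map_map, Subgroup.subgroupOf_map_subtype]
    rfl
  refine fun hdvd ↦ hP.2.2 ?_
  calc p ∣ (partialMap φ (P ⊓ T)).index := hdvd
    _ ∣ (P.subgroupOf E).relIndex (T.subgroupOf E) := hmap ▸ Subgroup.index_map_dvd _ hsurj
    _ = (P.subgroupOf E).relIndex (T.subgroupOf E ⊔ P.subgroupOf E) := by
      refine (relIndex_eq_of_coe_eq_mul ?_).symm
      rw [Subgroup.normal_mul]
    _ ∣ (P.subgroupOf E).index := Subgroup.relIndex_dvd_index_of_le le_sup_right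

theorem isCyclic_partialMap_inf {M P T : Subgroup G} [Group.IsNilpotent P]
    (hM : IsMaximalIn M P) (hPE : P ≤ E) (h : partialMap φ (M ⊓ T) = ⊥) :
    IsCyclic (partialMap φ (P ⊓ T)) := by
  by_cases hle : P ⊓ T ≤ M
  · have : partialMap φ (P ⊓ T) = ⊥ :=
      le_bot_iff.1 (h ▸ partialMap_mono φ (le_inf hle inf_le_right))
    rw [this]
    infer_instance
  obtain ⟨x, hx, hxM⟩ := SetLike.not_le_iff_exists.1 hle
  refine ⟨⟨φ ⟨x, hPE hx.1⟩, apply_mem_partialMap hx⟩, ?_⟩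
  rintro ⟨_, y, hy, rfl⟩
  obtain ⟨m, hm, k, hmk⟩ := hM.exists_eq_mul_zpow hx.1 hxM (y := y) hy.1
  have hmT : m ∈ T := (T.mul_mem_cancel_right (T.zpow_mem hx.2 k)).1 (hmk ▸ hy.2)
  have hφm : φ ⟨m, hPE (hM.1.le hm)⟩ ∈ partialMap φ (M ⊓ T) := apply_mem_partialMap ⟨hm, hmT⟩
  rw [h, Subgroup.mem_bot] at hφm
  have hy' : y = ⟨m, hPE (hM.1.le hm)⟩ * ⟨x, hPE hx.1⟩ ^ k := Subtype.ext hmk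
  refine ⟨k, Subtype.ext ?_⟩
  change φ ⟨x, hPE hx.1⟩ ^ k = φ y
  rw [hy', map_mul, hφm, one_mul, map_zpow]

theorem partialMap_eq_bot_of_isSolvable [IsSimpleGroup S] (hφ : Function.Surjective φ)
    (hS : ¬ Group.IsSolvable S) (hX : X.Normal) (hXs : Group.IsSolvable X) :
    partialMap φ X = ⊥ := by
  refine (partialMap_normal hφ hX).eq_bot_or_eq_top.resolve_right fun htop ↦ hS ?_
  have : Group.IsSolvable (⊤ : Subgroup S) := htop ▸ isSolvable_partialMap φ hXs
  exact isSolvable_of_isSolvable_top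

end PartialMap

section UsQuasinormal

variable {G S : Type*} [Group G] [Finite G] [Group S] [IsSimpleGroup S] {E : Subgroup G}
  {φ : E →* S} {P M T : Subgroup G}

theorem isSolvable_comap_uHypercenter (N : Subgroup G) [N.Normal] [hN : Group.IsSolvable N] :
    Group.IsSolvable ((UHypercenter (G ⧸ N)).comap (QuotientGroup.mk' N)) := by
  have h := (uHypercentral_uHypercenter (G ⧸ N)).comap (QuotientGroup.mk' N)
  rw [MonoidHom.comap_bot, QuotientGroup.ker_mk'] at h
  exact h.isSolvable hN

theorem partialMap_inf_eq_bot (hφ : Function.Surjective φ) (hS : ¬ Group.IsSolvable S)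
    [Group.IsNilpotent M] (hZ : ∀ x ∈ M ⊓ T,
      (QuotientGroup.mk x : G ⧸ M.normalCore) ∈ UHypercenter (G ⧸ M.normalCore)) :
    partialMap φ (M ⊓ T) = ⊥ := by
  have : Group.IsSolvable M.normalCore := Group.isSolvable_of_isSolvable_injective
    (Subgroup.inclusion_injective M.normalCore_le)
  have hnormal := (uHypercentral_uHypercenter (G ⧸ M.normalCore)).normal inferInstance
  rw [← le_bot_iff, ← partialMap_eq_bot_of_isSolvable hφ hS (hnormal.comap _)
    (isSolvable_comap_uHypercenter M.normalCore)]
  exact partialMap_mono φ hZ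

variable [Finite S]

-- Otherwise the image of `P ⊓ T` would be a cyclic Sylow subgroup of `S` for the smallest prime.
theorem partialMap_ne_top_of_isMaximalIn (hS : ¬ Group.IsSolvable S)
    (hP : IsSylowIn (Nat.card S).minFac P E) (hM : IsMaximalIn M P) (hT : T.Normal)
    (h : partialMap φ (M ⊓ T) = ⊥) : partialMap φ T ≠ ⊤ := fun htop ↦ by
  have := Fact.mk (minFac_card_prime S)
  have := hP.2.1.isNilpotent
  exact not_isCyclic_of_not_dvd_index hS (isPGroup_partialMap φ (hP.2.1.to_le inf_le_left))
    (not_dvd_index_partialMap_inf hP hT htop) (isCyclic_partialMap_inf hM hP.1 h)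

theorem not_usQuasinormal_of_isMaximalIn (hφ : Function.Surjective φ) (hS : ¬ Group.IsSolvable S)
    (hP : IsSylowIn (Nat.card S).minFac P E) (hM : IsMaximalIn M P) : ¬ UsQuasinormal M := by
  rintro ⟨T, hT, hperm, hZ⟩
  have hp := minFac_card_prime S
  have := Fact.mk hp
  have hMp : IsPGroup (Nat.card S).minFac M := hP.2.1.to_le hM.1.le
  have := hMp.isNilpotent
  have hTφ : partialMap φ T = ⊥ := (partialMap_normal hφ hT).eq_bot_or_eq_top.resolve_right <|
    partialMap_ne_top_of_isMaximalIn hS hP hM hT (partialMap_inf_eq_bot hφ hS hZ)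
  obtain ⟨Q, hQ⟩ := IsSylowIn.exists_of_prime hp (⊤ : Subgroup G)
  obtain hO | hO := (partialMap_normal hφ (T ⊔ Q).normalCore_normal).eq_bot_or_eq_top
  · refine partialMap_ne_top_of_isMaximalIn (T := ⊤) hS hP hM inferInstance ?_ (partialMap_top hφ)
    rw [inf_top_eq, ← le_bot_iff, ← hO]
    exact partialMap_mono φ (hperm.le_normalCore_sup hp hMp hT hQ)
  · have := isPGroup_partialMap_of_le_sup hT hTφ hQ.2.1 (T ⊔ Q).normalCore_le
    rw [hO] at this
    exact not_isPGroup_of_not_isSolvable hS hp (this.of_equiv Subgroup.topEquiv)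

end UsQuasinormal

/-- The hypothesis of the theorem, for an arbitrary subgroup `E` in place of `F*(H)`. -/
def SylowMaximalCondition {G : Type*} [Group G] (E : Subgroup G) : Prop :=
  ∀ p : ℕ, p.Prime → ∀ P : Subgroup G, IsSylowIn p P E → ¬ IsCyclic P →
    ∀ M : Subgroup G, IsMaximalIn M P → ¬ HasSupersolubleSupplement M → UsQuasinormal M

section Transitivity

theorem subsingleton_of_forall_isCoatom_transitive {P Ω : Type*} [Group P] [Nontrivial P]
    [IsCoatomic (Subgroup P)] [MulAction P Ω]
    (h : ∀ M : Subgroup P, IsCoatom M → ∀ x y : Ω, ∃ m ∈ M, m • x = y) : Subsingleton Ω := by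
  refine ⟨fun x y ↦ ?_⟩
  obtain hx | ⟨M, hM, hxM⟩ := eq_top_or_exists_le_coatom (MulAction.stabilizer P x)
  · obtain ⟨M, hM, -⟩ := (eq_top_or_exists_le_coatom (⊥ : Subgroup P)).resolve_left bot_ne_top
    obtain ⟨m, -, rfl⟩ := h M hM x y
    exact (MulAction.mem_stabilizer_iff.1 (hx ▸ Subgroup.mem_top m)).symm
  · refine (hM.1 (eq_top_iff.2 fun g _ ↦ ?_)).elim
    obtain ⟨m, hm, hmg⟩ := h M hM x (g • x)
    have hmem : m⁻¹ * g ∈ M := hxM <| MulAction.mem_stabilizer_iff.2 <| by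
      rw [mul_smul, ← hmg, inv_smul_smul]
    exact (M.mul_mem_cancel_left (M.inv_mem hm)).1 hmem

variable {S : Type*} [Group S] [Finite S] {p q : ℕ} {A B : Subgroup S}

theorem exists_sylow_le_normalizer (hp : p.Prime) (hq : q.Prime) (hpq : p ≠ q)
    (hmax : ∀ r : ℕ, r.Prime → r ∣ Nat.card S → r ≤ q) (hA : IsPGroup p A)
    (hB : IsSupersoluble B) (hAB : (A : Set S) * (B : Set S) = Set.univ) :
    ∃ Q : Sylow q S, B ≤ Subgroup.normalizer (Q : Set S) := by
  have := Fact.mk hp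
  obtain ⟨Q, hQ, hQB⟩ := hB.exists_normal_isSylowIn hq
    fun r hr hd ↦ hmax r hr (hd.trans B.card_subgroup_dvd_card)
  have hqB : ¬ q ∣ B.index := fun hd ↦ by
    obtain ⟨k, hk⟩ := IsPGroup.iff_card.1 hA
    rw [← Subgroup.relIndex_top_right, relIndex_eq_of_coe_eq_mul (M := A) hAB.symm] at hd
    have hdvd : q ∣ p ^ k := hk ▸ hd.trans (B.relIndex_dvd_card A)
    exact hpq ((Nat.prime_dvd_prime_iff_eq hq hp).1 (hq.dvd_of_dvd_pow hdvd)).symm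
  have hi : ¬ q ∣ (Q.map B.subtype).index := by
    rw [Subgroup.index_map_subtype, hq.dvd_mul]
    exact fun h ↦ h.elim hQB.not_dvd_index hqB
  have := Fact.mk hq
  refine ⟨(hQB.2.1.map B.subtype).toSylow hi, ?_⟩
  have hle := Subgroup.le_normalizer_map (H := Q) B.subtype
  rwa [Subgroup.normalizer_eq_top, ← MonoidHom.range_eq_map, Subgroup.range_subtype] at hle

theorem exists_smul_sylow_eq [Fact q.Prime] (hAB : (A : Set S) * (B : Set S) = Set.univ)
    {Q₀ : Sylow q S} (hQ₀ : B ≤ Subgroup.normalizer (Q₀ : Set S)) (Q Q' : Sylow q S) :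
    ∃ a ∈ A, a • Q = Q' := by
  have hA : ∀ Q : Sylow q S, ∃ a ∈ A, a • Q₀ = Q := fun Q ↦ by
    obtain ⟨s, rfl⟩ := MulAction.exists_smul_eq S Q₀ Q
    obtain ⟨a, ha, b, hb, rfl⟩ := hAB.symm.subset (Set.mem_univ s)
    exact ⟨a, ha, by simp only [mul_smul, Sylow.smul_eq_iff_mem_normalizer.2 (hQ₀ hb)]⟩
  obtain ⟨a, ha, rfl⟩ := hA Q
  obtain ⟨c, hc, rfl⟩ := hA Q'
  exact ⟨c * a⁻¹, mul_mem hc (inv_mem ha), by rw [mul_smul, inv_smul_smul]⟩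

end Transitivity

section Solvability

variable {G S : Type*} [Group G] [Finite G] [Group S] [Finite S] {E : Subgroup G} {φ : E →* S}

theorem exists_apply_smul_sylow_eq (hφ : Function.Surjective φ) {p q : ℕ} (hp : p.Prime)
    [Fact q.Prime] (hpq : p ≠ q) (hmax : ∀ r : ℕ, r.Prime → r ∣ Nat.card S → r ≤ q)
    {M : Subgroup G} (hM : IsPGroup p M) (hME : M ≤ E) (hs : HasSupersolubleSupplement M)
    (Q Q' : Sylow q S) : ∃ m : E, (m : G) ∈ M ∧ φ m • Q = Q' := by
  obtain ⟨T, hT, hMT⟩ := hs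
  have hmul := partialMap_mul_partialMap_eq_univ hφ hME hMT
  obtain ⟨Q₀, hQ₀⟩ := exists_sylow_le_normalizer hp Fact.out hpq hmax (isPGroup_partialMap φ hM)
    (isSupersoluble_partialMap φ hT) hmul
  obtain ⟨_, ⟨m, hm, rfl⟩, h⟩ := exists_smul_sylow_eq hmul hQ₀ Q Q'
  exact ⟨m, hm, h⟩

theorem subsingleton_sylow_of_forall_hasSupersolubleSupplement (hφ : Function.Surjective φ)
    {p q : ℕ} (hp : p.Prime) [Fact q.Prime] (hpq : p ≠ q)
    (hmax : ∀ r : ℕ, r.Prime → r ∣ Nat.card S → r ≤ q) {P : Subgroup G} [Nontrivial P]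
    (hP : IsPGroup p P) (hPE : P ≤ E)
    (hsupp : ∀ M : Subgroup G, IsMaximalIn M P → HasSupersolubleSupplement M) :
    Subsingleton (Sylow q S) := by
  let := MulAction.compHom (Sylow q S) (φ.comp (Subgroup.inclusion hPE))
  refine subsingleton_of_forall_isCoatom_transitive (P := P) fun M hM Q Q' ↦ ?_
  have hMP := IsMaximalIn.of_isCoatom hM
  obtain ⟨m, ⟨x, hx, hxm⟩, h⟩ := exists_apply_smul_sylow_eq hφ hp hpq hmax (hP.to_le hMP.1.le)
    (hMP.1.le.trans hPE) (hsupp _ hMP) Q Q'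
  obtain rfl : Subgroup.inclusion hPE x = m := Subtype.ext hxm
  exact ⟨x, hx, h⟩

theorem exists_max_prime_dvd_card (hS : ¬ Group.IsSolvable S) : ∃ q : ℕ, q.Prime ∧
    q ∣ Nat.card S ∧ (Nat.card S).minFac ≠ q ∧ ∀ r : ℕ, r.Prime → r ∣ Nat.card S → r ≤ q := by
  have : Nontrivial S := not_subsingleton_iff_nontrivial.1 fun _ ↦ hS inferInstance
  have hp := minFac_card_prime S
  obtain ⟨q, hqS, hqmax⟩ := (Nat.card S).primeFactors.exists_max_image id
    ⟨_, Nat.mem_primeFactors.2 ⟨hp, Nat.minFac_dvd _, Nat.card_pos.ne'⟩⟩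
  obtain ⟨hq, hqd, -⟩ := Nat.mem_primeFactors.1 hqS
  have hmax (r : ℕ) (hr : r.Prime) (hd : r ∣ Nat.card S) : r ≤ q :=
    hqmax r (Nat.mem_primeFactors.2 ⟨hr, hd, Nat.card_pos.ne'⟩)
  refine ⟨q, hq, hqd, fun h ↦ not_isPGroup_of_not_isSolvable hS hp ?_, hmax⟩
  have := Fact.mk hp
  refine IsPGroup.iff_card.2 ⟨_, Nat.eq_prime_pow_of_unique_prime_dvd Nat.card_pos.ne' ?_⟩
  exact fun {r} hr hd ↦ le_antisymm (h ▸ hmax r hr hd) (Nat.minFac_le_of_dvd hr.two_le hd)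

theorem not_subsingleton_sylow [IsSimpleGroup S] (hS : ¬ Group.IsSolvable S) {q : ℕ}
    (hq : q.Prime) (hqd : q ∣ Nat.card S) : ¬ Subsingleton (Sylow q S) := fun _ ↦ by
  have := Fact.mk hq
  obtain ⟨Q⟩ := (inferInstance : Nonempty (Sylow q S))
  obtain h | h := (Q.normal_of_subsingleton).eq_bot_or_eq_top
  · exact Q.not_dvd_index (by rwa [h, Subgroup.index_bot])
  · have hQ : IsPGroup q (⊤ : Subgroup S) := h ▸ Q.2
    exact not_isPGroup_of_not_isSolvable hS hq (hQ.of_equiv Subgroup.topEquiv)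

theorem SylowMaximalCondition.isSolvable_of_isSimpleGroup [IsSimpleGroup S]
    (hE : SylowMaximalCondition E) (hφ : Function.Surjective φ) : Group.IsSolvable S := by
  by_contra hS
  have hp := minFac_card_prime S
  have := Fact.mk hp
  obtain ⟨P, hP⟩ := IsSylowIn.exists_of_prime hp E
  have hnc : ¬ IsCyclic P := fun _ ↦ by
    have hi : ¬ (Nat.card S).minFac ∣ (partialMap φ P).index := fun h ↦
      hP.2.2 (h.trans (Subgroup.index_map_dvd _ hφ))
    refine not_isCyclic_of_not_dvd_index hS (isPGroup_partialMap φ hP.2.1) hi ?_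
    have : IsCyclic (P.subgroupOf E) :=
      isCyclic_of_injective _ (subgroupComap_subtype_injective E P)
    exact isCyclic_of_surjective _ (φ.subgroupMap_surjective (P.subgroupOf E))
  have : Nontrivial P := not_subsingleton_iff_nontrivial.1 fun _ ↦ hnc inferInstance
  obtain ⟨q, hq, hqd, hpq, hmax⟩ := exists_max_prime_dvd_card hS
  have := Fact.mk hq
  refine not_subsingleton_sylow hS hq hqd <|
    subsingleton_sylow_of_forall_hasSupersolubleSupplement hφ hp hpq hmax hP.2.1 hP.1 fun M hM ↦ ?_
  by_contra hM'
  exact not_usQuasinormal_of_isMaximalIn hφ hS hP hM (hE _ hp P hP hnc M hM hM')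

end Solvability

theorem SylowMaximalCondition.isNilpotent_fStarIn {G : Type u} [Group G] [Finite G]
    {H : Subgroup G} (hF : SylowMaximalCondition (FStarIn H)) : Group.IsNilpotent (FStarIn H) := by
  suffices Group.IsSolvable (FStarIn H) from _root_.isNilpotent_fStarIn
  by_contra hs
  obtain ⟨S, _, φ, hφ, hsimple, hS⟩ := exists_isSimpleGroup_of_not_isSolvable_fStarIn hs
  have : Finite S := Finite.of_surjective φ hφ
  exact hS (hF.isSolvable_of_isSimpleGroup hφ)

/-! ## Elementary abelian sections of a normal `p`-subgroup -/

section Maximal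

variable {G : Type*} [Group G] {D N P Q : Subgroup G}

theorem eq_bot_of_le_commutator [Group.IsNilpotent Q] (hNQ : N ≤ Q) (h : N ≤ ⁅N, Q⁆) :
    N = ⊥ := by
  have hle (n : ℕ) : N ≤ Q.lowerCentralSeries n := by
    induction n with
    | zero => exact hNQ
    | succ n ih => exact h.trans (Subgroup.commutator_mono ih le_rfl)
  obtain ⟨n, hn⟩ := Q.isNilpotent_iff_lowerCentralSeries.1 ‹_›
  exact le_bot_iff.1 (hn ▸ hle n)

theorem commutator_sup_lt [Group.IsNilpotent Q] [D.Normal] [N.Normal] (hDN : D < N)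
    (hNQ : N ≤ Q) : ⁅N, Q⁆ ⊔ D < N := by
  refine lt_of_le_of_ne (sup_le (Subgroup.commutator_le_left N Q) hDN.le) fun h ↦ hDN.not_ge ?_
  have hmap : N.map (QuotientGroup.mk' D) ≤
      ⁅N.map (QuotientGroup.mk' D), Q.map (QuotientGroup.mk' D)⁆ := by
    rw [← Subgroup.map_commutator]
    nth_rewrite 1 [← h]
    rw [Subgroup.map_sup, QuotientGroup.map_mk'_self, sup_bot_eq]
  have := Group.nilpotent_of_surjective _ ((QuotientGroup.mk' D).subgroupMap_surjective Q)
  have hbot := eq_bot_of_le_commutator (Subgroup.map_mono hNQ) hmap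
  rwa [Subgroup.map_eq_bot_iff, QuotientGroup.ker_mk'] at hbot

theorem exists_isMaximalIn_le_normalizer [Finite G] [Group.IsNilpotent Q] [D.Normal] [N.Normal]
    (hDN : D < N) (hNQ : N ≤ Q) :
    ∃ M, D ≤ M ∧ IsMaximalIn M N ∧ Q ≤ Subgroup.normalizer M := by
  obtain ⟨M, hle, hM⟩ := IsMaximalIn.exists_ge (commutator_sup_lt hDN hNQ)
  refine ⟨M, le_sup_right.trans hle, hM, Subgroup.le_normalizer_iff_commutator_le_left.2 ?_⟩
  exact (Subgroup.commutator_mono hM.1.le le_rfl).trans (le_sup_left.trans hle)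

theorem IsChiefFactor.prime_relIndex_of_isMaximalIn [Finite G] [Group.IsNilpotent N]
    (hc : IsChiefFactor N D) (hD : IsMaximalIn D N) : (D.relIndex N).Prime := by
  obtain ⟨g, hg, hgD⟩ := SetLike.not_le_iff_exists.1 hD.1.not_ge
  refine (UHypercentral.of_cyclic hc.2.1 hc.1 hD.1.le hg fun x hx ↦ ?_).prime_relIndex hc
  obtain ⟨m, hm, k, rfl⟩ := hD.exists_eq_mul_zpow hg hgD hx
  refine ⟨k, ?_⟩
  simpa [mul_assoc] using hc.2.1.conj_mem _ (D.inv_mem hm) (g ^ (-k))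

end Maximal

/-- The section `P / D` is elementary abelian of exponent dividing `p`; neither `D ≤ P` nor the
normality of `D` is part of the definition. -/
structure IsElementaryAbelianSection {G : Type*} [Group G] (p : ℕ) (D P : Subgroup G) : Prop where
  pow_mem : ∀ x ∈ P, x ^ p ∈ D
  commutator_le : ⁅P, P⁆ ≤ D

theorem mem_of_zpow_mem_of_isCoprime {G : Type*} [Group G] {L : Subgroup G} {y : G} {m n : ℤ}
    (hmn : IsCoprime m n) (hm : y ^ m ∈ L) (hn : y ^ n ∈ L) : y ∈ L := by
  obtain ⟨u, v, huv⟩ := hmn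
  rw [← zpow_one y, ← huv, zpow_add, mul_comm u, mul_comm v, zpow_mul, zpow_mul]
  exact L.mul_mem (L.zpow_mem hm u) (L.zpow_mem hn v)

namespace IsElementaryAbelianSection

variable {G : Type*} [Group G] {p : ℕ} {D D' L P : Subgroup G}

theorem mono_left (h : IsElementaryAbelianSection p D P) (hD : D ≤ D') :
    IsElementaryAbelianSection p D' P :=
  ⟨fun x hx ↦ hD (h.pow_mem x hx), h.commutator_le.trans hD⟩

theorem le_normalizer (h : IsElementaryAbelianSection p D P) (hDL : D ≤ L) (hLP : L ≤ P) :
    P ≤ Subgroup.normalizer L :=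
  Subgroup.le_normalizer_iff_commutator_le_right.2
    ((Subgroup.commutator_mono le_rfl hLP).trans (h.commutator_le.trans hDL))

theorem exists_isMaximalIn_notMem [Finite G] (h : IsElementaryAbelianSection p D P)
    (hp : p.Prime) (hDL : D ≤ L) (hLP : L ≤ P) {x : G} (hx : x ∈ P) (hxL : x ∉ L) :
    ∃ M, L ≤ M ∧ x ∉ M ∧ IsMaximalIn M P := by
  obtain ⟨M, hLM, ⟨hMP, hxM⟩, hmax⟩ := Finite.exists_le_maximal
    (p := fun K : Subgroup G ↦ K ≤ P ∧ x ∉ K) ⟨hLP, hxL⟩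
  have hmem {K : Subgroup G} (hMK : M < K) (hKP : K ≤ P) : x ∈ K := by
    by_contra hxK
    exact hMK.not_ge (hmax ⟨hKP, hxK⟩ hMK.le)
  refine ⟨M, hLM, hxM, lt_of_le_of_ne hMP fun h ↦ hxM (h ▸ hx), fun K hMK hKP ↦ ?_⟩
  refine le_antisymm hKP fun y hy ↦ ?_
  by_contra hyK
  have hyP : Subgroup.zpowers y ≤ P := Subgroup.zpowers_le.2 hy
  have hxy : x ∈ M ⊔ Subgroup.zpowers y :=
    hmem (left_lt_sup.2 fun h ↦ hyK (hMK.le (h (Subgroup.mem_zpowers y)))) (sup_le hMP hyP)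
  rw [← SetLike.mem_coe, Subgroup.coe_mul_of_right_le_normalizer_left _ _
    (hyP.trans (h.le_normalizer (hDL.trans hLM) hMP))] at hxy
  obtain ⟨m, hm, _, ⟨k, rfl⟩, hmk : m * y ^ k = x⟩ := hxy
  have hypM : y ^ (p : ℤ) ∈ M := hLM (hDL (zpow_natCast y p ▸ h.pow_mem y hy))
  have hyk : y ^ k ∈ K := (K.mul_mem_cancel_left (hMK.le hm)).1 (hmk ▸ hmem hMK hKP)
  refine hyK (mem_of_zpow_mem_of_isCoprime
    ((Nat.prime_iff_prime_int.1 hp).coprime_iff_not_dvd.2 ?_) (hMK.le hypM) hyk)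
  rintro ⟨j, rfl⟩
  rw [zpow_mul] at hmk
  exact hxM (hmk ▸ M.mul_mem hm (M.zpow_mem hypM j))

end IsElementaryAbelianSection

section Supplement

variable {G : Type*} [Group G] {D M N P T Y : Subgroup G}

theorem inf_sup_eq_of_coe_sup_eq_mul {A B : Subgroup G}
    (h : ((A ⊔ B : Subgroup G) : Set G) = A * B) (hB : B ≤ P) : P ⊓ (A ⊔ B) = (P ⊓ A) ⊔ B := by
  refine le_antisymm ?_ (sup_le (inf_le_inf_left P le_sup_left) (le_inf hB le_sup_right))
  rw [← SetLike.coe_subset_coe, Subgroup.coe_inf, h, ← Subgroup.inf_mul_assoc _ _ _ hB]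
  exact Set.mul_subset_iff.2 fun a ha b hb ↦ Subgroup.mul_mem_sup ha hb

theorem normal_sup_of_sup_eq_top [D.Normal] (hMT : M ⊔ T = ⊤) (hT : T ≤ Subgroup.normalizer Y)
    (hM : ⁅M, Y⁆ ≤ D) : (Y ⊔ D).Normal := by
  rw [← Subgroup.normalizer_eq_top_iff, ← top_le_iff, ← hMT]
  refine sup_le (Subgroup.le_normalizer_iff.2 fun m hm z hz ↦ ?_)
    (hT.trans Subgroup.normalizer_le_normalizer_sup_normal)
  obtain ⟨y, hy, d, hd, rfl⟩ := Subgroup.mem_sup_of_normal_right.1 hz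
  have hconj : m * (y * d) * m⁻¹ = ⁅m, y⁆ * y * (m * d * m⁻¹) := by
    rw [commutatorElement_def]; group
  rw [hconj]
  exact mul_mem (mul_mem (Subgroup.mem_sup_right (hM (Subgroup.commutator_mem_commutator hm hy)))
    (Subgroup.mem_sup_left hy)) (Subgroup.mem_sup_right (‹D.Normal›.conj_mem d hd m))

theorem relIndex_map_sup_dvd {L : Type*} [Group L] [D.Normal] (f : L →* G) {B A : Subgroup L}
    [B.Normal] (hBA : B ≤ A) : (B.map f ⊔ D).relIndex (A.map f ⊔ D) ∣ B.relIndex A := by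
  have h := Subgroup.relIndex_map_map (QuotientGroup.mk' D) (B.map f) (A.map f)
  rw [QuotientGroup.ker_mk'] at h
  rw [← h, Subgroup.map_map, Subgroup.map_map, Subgroup.relIndex_map_map]
  exact relIndex_sup_sup_dvd hBA

theorem IsSupersoluble.uHypercentral_of_le_sup [Finite G] [D.Normal] [N.Normal]
    (hT : IsSupersoluble T) (hDN : D ≤ N) (hNT : N ≤ T ⊔ D)
    (hnormal : ∀ Y ≤ N, T ≤ Subgroup.normalizer Y → (Y ⊔ D).Normal) : UHypercentral D N := by
  have h := (isSupersoluble_iff_uHypercentral.1 hT).map_of_relIndex_dvd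
    (fun X ↦ (X ⊓ N.subgroupOf T).map T.subtype ⊔ D) (fun X hX ↦ hnormal _ ?_ ?_)
    (fun B A h ↦ sup_le_sup_right (Subgroup.map_mono (inf_le_inf_right _ h)) _)
    fun B A hB hBA ↦ (relIndex_map_sup_dvd T.subtype (inf_le_inf_right _ hBA)).trans
      (relIndex_inf_inf_dvd hBA)
  · have hN : (N ⊓ T) ⊔ D = N := by
      rw [← inf_sup_eq_of_coe_sup_eq_mul (Subgroup.mul_normal T D) hDN, inf_eq_left.2 hNT]
    simpa [hN] using h
  · exact (Subgroup.map_mono inf_le_right).trans (Subgroup.map_comap_le _ _)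
  · rw [← Subgroup.normal_subgroupOf_iff_le_normalizer (Subgroup.map_subtype_le _),
      Subgroup.subgroupOf, Subgroup.comap_map_eq_self_of_injective T.subtype_injective]
    exact Subgroup.normal_inf_normal X (N.subgroupOf T)

end Supplement

theorem le_normalizer_inf {G : Type*} [Group G] {N M Q : Subgroup G} [N.Normal]
    (hQ : Q ≤ Subgroup.normalizer M) : Q ≤ Subgroup.normalizer (N ⊓ M : Subgroup G) :=
  (le_inf Subgroup.le_normalizer_of_normal hQ).trans Subgroup.inf_normalizer_le_normalizer_inf

theorem le_of_forall_isSylowIn {G : Type*} [Group G] {E L : Subgroup G}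
    (h : ∀ q : ℕ, q.Prime → ∃ Q, IsSylowIn q Q E ∧ Q ≤ L) : E ≤ L := by
  rw [← Subgroup.relIndex_eq_one]
  by_contra hne
  obtain ⟨q, hq, hd⟩ := Nat.exists_prime_and_dvd hne
  obtain ⟨Q, hQ, hQL⟩ := h q hq
  exact hQ.2.2 (hd.trans (Subgroup.relIndex_dvd_of_le_left E hQL))

section Permutable

variable {G : Type*} [Group G] [Finite G] {p q : ℕ} {K M P Q T : Subgroup G}

theorem SPermutable.inf_sup_le (hK : SPermutable K) (hq : q.Prime) (hQ : IsSylowIn q Q ⊤)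
    (hp : p.Prime) (hpq : p ≠ q) [P.Normal] (hP : IsPGroup p P) : P ⊓ (K ⊔ Q) ≤ K := by
  refine le_of_isPGroup_of_not_dvd_relIndex hp (hP.to_le inf_le_left) fun hdvd ↦ ?_
  have hKQ : K.relIndex (K ⊔ Q) ∣ Nat.card Q := by
    have hR : ((K ⊔ Q : Subgroup G) : Set G) = Q * K :=
      (coe_sup_of_mul_comm (hK q hq Q hQ)).trans (hK q hq Q hQ)
    rw [relIndex_eq_of_coe_eq_mul hR]
    exact Subgroup.relIndex_dvd_card K Q
  have hPK : K.relIndex (P ⊓ (K ⊔ Q)) = K.relIndex ((P ⊓ (K ⊔ Q)) ⊔ K) :=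
    (relIndex_eq_of_coe_eq_mul (Subgroup.coe_mul_of_right_le_normalizer_left _ _ <|
      le_sup_left.trans (le_normalizer_inf Subgroup.le_normalizer))).symm
  have hle : (P ⊓ (K ⊔ Q)) ⊔ K ≤ K ⊔ Q := sup_le inf_le_right le_sup_left
  have := Fact.mk hq
  obtain ⟨k, hk⟩ := IsPGroup.iff_card.1 hQ.2.1
  have hpQ : p ∣ Nat.card Q := (hPK ▸ hdvd).trans <|
    (Dvd.intro _ (Subgroup.relIndex_mul_relIndex _ _ _ le_sup_right hle)).trans hKQ
  rw [hk] at hpQ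
  exact hpq ((Nat.prime_dvd_prime_iff_eq hp hq).1 (hp.dvd_of_dvd_pow hpQ))

theorem SPermutable.le_normalizer_of_inf_le (hs : SPermutable (M ⊔ T)) [T.Normal] (hq : q.Prime)
    (hQ : IsSylowIn q Q ⊤) (hp : p.Prime) (hpq : p ≠ q) [P.Normal] (hP : IsPGroup p P)
    (hMP : M ≤ P) (hTP : P ⊓ T ≤ M) : Q ≤ Subgroup.normalizer M := by
  have hM : P ⊓ (M ⊔ T ⊔ Q) = M := by
    refine le_antisymm ?_ (le_inf hMP (le_sup_left.trans le_sup_left))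
    refine (le_inf inf_le_left (hs.inf_sup_le hq hQ hp hpq hP)).trans ?_
    rw [sup_comm, inf_sup_eq_of_coe_sup_eq_mul (Subgroup.normal_mul T M) hMP]
    exact sup_le hTP le_rfl
  refine le_sup_right.trans (b := M ⊔ T ⊔ Q) ?_
  nth_rewrite 2 [← hM]
  exact le_normalizer_inf Subgroup.le_normalizer

end Permutable

theorem IsChiefFactor.prime_relIndex_of_mem_uHypercenter {G : Type*} [Group G] [Finite G]
    {N D : Subgroup G} [D.Normal] (hc : IsChiefFactor N D) {x : G} (hxN : x ∈ N) (hxD : x ∉ D)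
    (hx : (x : G ⧸ D) ∈ UHypercenter (G ⧸ D)) : (D.relIndex N).Prime := by
  have hZ := ((uHypercentral_uHypercenter (G ⧸ D)).comap (QuotientGroup.mk' D)).inf_right hc.1
  rw [MonoidHom.comap_bot, QuotientGroup.ker_mk', inf_eq_left.2 hc.2.2.1.le] at hZ
  set Z := (UHypercenter (G ⧸ D)).comap (QuotientGroup.mk' D) ⊓ N
  have hDZ : D < Z := lt_of_le_of_ne hZ.le fun h ↦ hxD (h ▸ ⟨hx, hxN⟩)
  have hZN : Z = N := by
    by_contra hne
    exact hc.2.2.2 Z (hZ.normal inferInstance) hDZ (lt_of_le_of_ne inf_le_right hne)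
  exact (hZN ▸ hZ).prime_relIndex hc

/-- `N / D` is the unique minimal normal subgroup of `G / D` contained in `P / D`. -/
structure IsMonolith {G : Type*} [Group G] (N D P : Subgroup G) : Prop where
  isChiefFactor : IsChiefFactor N D
  le : N ≤ P
  le_of_lt : ∀ W : Subgroup G, W.Normal → D < W → W ≤ P → N ≤ W

namespace IsMonolith

variable {G : Type*} [Group G] {D M N P Q T : Subgroup G} {p : ℕ}

theorem normalCore_eq (h : IsMonolith N D P) (hDM : D ≤ M) (hMP : M ≤ P) (hNM : ¬ N ≤ M) :
    M.normalCore = D := by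
  have := h.isChiefFactor.2.1
  refine (eq_of_le_of_not_lt (Subgroup.normal_le_normalCore.2 hDM) fun hlt ↦ hNM ?_).symm
  have hle := Subgroup.normalCore_le M
  exact (h.le_of_lt _ inferInstance hlt (hle.trans hMP)).trans hle

theorem le_inf_sup (h : IsMonolith N D P) [(P ⊓ T ⊔ D).Normal] (hPT : ¬ P ⊓ T ≤ D) :
    N ≤ P ⊓ T ⊔ D :=
  h.le_of_lt _ inferInstance (right_lt_sup.2 hPT)
    (sup_le inf_le_left (h.isChiefFactor.2.2.1.le.trans h.le))

variable [Finite G]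

theorem prime_relIndex_of_hasSupersolubleSupplement (h : IsMonolith N D P) [P.Normal]
    (hab : ⁅P, P⁆ ≤ D) (hDM : D ≤ M) (hMP : M < P) (hM : HasSupersolubleSupplement M) :
    (D.relIndex N).Prime := by
  obtain ⟨T, hT, hMT⟩ := hM
  have hD := h.isChiefFactor.2.1
  have hN := h.isChiefFactor.1
  have hsup : M ⊔ T = ⊤ := by
    refine eq_top_iff.2 fun g _ ↦ ?_
    obtain ⟨m, hm, t, ht, rfl⟩ := hMT.ge (Set.mem_univ g)
    exact Subgroup.mul_mem_sup hm ht
  have hnormal : ∀ Y ≤ P, T ≤ Subgroup.normalizer Y → (Y ⊔ D).Normal := fun Y hY hTY ↦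
    normal_sup_of_sup_eq_top hsup hTY ((Subgroup.commutator_mono hMP.le hY).trans hab)
  have := hnormal (P ⊓ T) inf_le_left (le_normalizer_inf Subgroup.le_normalizer)
  have hPT : ¬ P ⊓ T ≤ D := fun hle ↦ hMP.not_ge fun x hx ↦ by
    have hx' : x ∈ (M : Set G) * (T : Set G) ∩ P := ⟨hMT ▸ Set.mem_univ x, hx⟩
    rw [← Subgroup.mul_inf_assoc _ _ _ hMP.le, inf_comm] at hx'
    obtain ⟨m, hm, t, ht, rfl⟩ := hx'
    exact M.mul_mem hm (hDM (hle ht))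
  refine (hT.uHypercentral_of_le_sup h.isChiefFactor.2.2.1.le ?_ fun Y hY ↦
    hnormal Y (hY.trans h.le)).prime_relIndex h.isChiefFactor
  exact (h.le_inf_sup hPT).trans (sup_le_sup_right inf_le_right D)

theorem prime_relIndex_of_usQuasinormal (h : IsMonolith N D P) [P.Normal] (hp : p.Prime)
    (hP : IsPGroup p P) (hDM : D ≤ M) (hMP : M ≤ P) (hNM : ¬ N ≤ M) (hMN : ¬ M ⊓ N ≤ D)
    (hQ : IsSylowIn p Q ⊤) (hQM : Q ≤ Subgroup.normalizer (M ⊓ N : Subgroup G))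
    (hM : UsQuasinormal M) : (D.relIndex N).Prime := by
  have hc := h.isChiefFactor
  obtain rfl := h.normalCore_eq hDM hMP hNM
  obtain ⟨T, hT, hs, hZ⟩ := hM
  have hN := hc.1
  have hPT : ¬ P ⊓ T ≤ M := fun hle ↦ by
    have hnormal : (M ⊓ N).Normal := by
      rw [← Subgroup.normalizer_eq_top_iff, ← top_le_iff]
      refine le_of_forall_isSylowIn fun q hq ↦ ?_
      by_cases hqp : q = p
      · exact ⟨Q, hqp ▸ hQ, hQM⟩
      obtain ⟨R, hR⟩ := IsSylowIn.exists_of_prime hq (⊤ : Subgroup G)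
      exact ⟨R, hR, inf_comm N M ▸ le_normalizer_inf
        (hs.le_normalizer_of_inf_le hq hR hp (Ne.symm hqp) hP hMP hle)⟩
    exact hc.2.2.2 _ hnormal (lt_of_le_not_ge (le_inf hDM hc.2.2.1.le) hMN) (inf_lt_right.2 hNM)
  obtain ⟨x, hx, hxD⟩ := SetLike.not_le_iff_exists.1 hMN
  have hNT := h.le_inf_sup (T := T) fun hle ↦ hPT (hle.trans hDM)
  obtain ⟨t, ht, d, hd, rfl⟩ := Subgroup.mem_sup_of_normal_right.1 (hNT hx.2)
  have htMN : t ∈ M ⊓ N := (Subgroup.mul_mem_cancel_right _ (le_inf hDM hc.2.2.1.le hd)).1 hx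
  exact hc.prime_relIndex_of_mem_uHypercenter htMN.2
    (fun htD ↦ hxD (mul_mem htD hd)) (hZ t ⟨htMN.1, ht.2⟩)

theorem prime_relIndex (h : IsMonolith N D P) [P.Normal] (hp : p.Prime) (hP : IsPGroup p P)
    (hab : IsElementaryAbelianSection p D P)
    (hmax : ∀ M, IsMaximalIn M P → ¬ HasSupersolubleSupplement M → UsQuasinormal M) :
    (D.relIndex N).Prime := by
  have := Fact.mk hp
  have hc := h.isChiefFactor
  have ⟨_, _, hDN, _⟩ := hc
  obtain ⟨Q, hQ⟩ := IsSylowIn.exists_of_prime hp (⊤ : Subgroup G)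
  have hPQ : P ≤ Q := hP.le_sylow_of_normal (hQ.2.1.toSylow hQ.not_dvd_index)
  have := hQ.2.1.isNilpotent
  have := (hP.to_le h.le).isNilpotent
  obtain ⟨L, hDL, hL, hQL⟩ := exists_isMaximalIn_le_normalizer hDN (h.le.trans hPQ)
  obtain ⟨x, hxN, hxL⟩ := SetLike.not_le_iff_exists.1 hL.1.not_ge
  obtain ⟨M, hLM, hxM, hM⟩ :=
    hab.exists_isMaximalIn_notMem hp hDL (hL.1.le.trans h.le) (h.le hxN) hxL
  have hNM : ¬ N ≤ M := fun hle ↦ hxM (hle hxN)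
  have hMN : M ⊓ N = L := by
    refine (eq_of_le_of_not_lt (le_inf hLM hL.1.le) fun hlt ↦ hNM ?_).symm
    exact inf_eq_right.1 (hL.2 _ hlt inf_le_right)
  by_cases hsupp : HasSupersolubleSupplement M
  · exact h.prime_relIndex_of_hasSupersolubleSupplement hab.commutator_le (hDL.trans hLM) hM.1 hsupp
  obtain rfl | hlt := hDL.eq_or_lt
  · exact hc.prime_relIndex_of_isMaximalIn hL
  · exact h.prime_relIndex_of_usQuasinormal hp hP (hDL.trans hLM) hM.1.le hNM (hMN ▸ hlt.not_ge)
      hQ (hMN ▸ hQL) (hmax M hM hsupp)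

end IsMonolith

theorem IsChiefFactor.inf_eq {G : Type*} [Group G] {D K N : Subgroup G} (hK : IsChiefFactor K D)
    (hN : IsChiefFactor N D) (hne : K ≠ N) : K ⊓ N = D := by
  have hDK := hK.2.2.1
  have hDN := hN.2.2.1
  have := hK.1
  have := hN.1
  by_contra hD
  have hlt : D < K ⊓ N := lt_of_le_of_ne (le_inf hDK.le hDN.le) (Ne.symm hD)
  have hKN : K ≤ N := by
    by_contra h
    exact hK.2.2.2 _ inferInstance hlt (inf_lt_left.2 h)
  exact hN.2.2.2 K hK.1 hDK (lt_of_le_of_ne hKN hne)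

theorem IsElementaryAbelianSection.uHypercentral {G : Type*} [Group G] [Finite G] {p : ℕ}
    {D P : Subgroup G} (hD : D.Normal) [P.Normal] (hab : IsElementaryAbelianSection p D P)
    (hp : p.Prime) (hP : IsPGroup p P) (hDP : D ≤ P)
    (hmax : ∀ M, IsMaximalIn M P → ¬ HasSupersolubleSupplement M → UsQuasinormal M) :
    UHypercentral D P := by
  induction D using WellFoundedGT.induction with
  | ind D ih =>
  obtain rfl | hlt := hDP.eq_or_lt
  · exact .rfl
  obtain ⟨N, hc, hNP⟩ := IsChiefFactor.exists_le hD ‹P.Normal› hlt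
  have hup {K : Subgroup G} (hK : IsChiefFactor K D) (hKP : K ≤ P) : UHypercentral K P :=
    ih K hK.2.2.1 hK.1 (hab.mono_left hK.2.2.1.le) hKP
  suffices (D.relIndex N).Prime from (hup hc hNP).head ⟨hD, hc.1, hc.2.2.1.le, this⟩
  by_cases hu : ∀ K, IsChiefFactor K D → K ≤ P → K = N
  · refine IsMonolith.prime_relIndex ⟨hc, hNP, fun W hW hDW hWP ↦ ?_⟩ hp hP hab hmax
    obtain ⟨K, hK, hKW⟩ := IsChiefFactor.exists_le hD hW hDW
    exact hu K hK (hKW.trans hWP) ▸ hKW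
  push Not at hu
  obtain ⟨K, hK, hKP, hne⟩ := hu
  have hN := (hup hK hKP).inf_right hc.1
  rw [hK.inf_eq hc hne, inf_eq_right.2 hNP] at hN
  exact hN.prime_relIndex hc

/-! ## The Frattini subgroup of a normal `p`-subgroup -/

theorem IsMaximalIn.isElementaryAbelianSection {G : Type*} [Group G] [Finite G] {p : ℕ}
    (hp : p.Prime) {M P : Subgroup G} (hP : IsPGroup p P) (hM : IsMaximalIn M P) :
    IsElementaryAbelianSection p M P := by
  have := Fact.mk hp
  have := hP.isNilpotent
  refine ⟨fun x hx ↦ ?_, Subgroup.commutator_le.2 fun x hx y hy ↦ ?_⟩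
  · by_contra hxp
    obtain ⟨m, hm, k, hk⟩ := hM.exists_eq_mul_zpow (P.pow_mem hx p) hxp hx
    obtain ⟨j, hj⟩ := hP ⟨x, hx⟩
    have hxj : x ^ p ^ j = 1 := congrArg Subtype.val hj
    have hxjM : x ^ ((p : ℤ) ^ j) ∈ M := by
      rw [← Nat.cast_pow, zpow_natCast, hxj]
      exact M.one_mem
    have hxk : x ^ (1 - p * k) = m := by
      rw [zpow_sub, zpow_one, zpow_mul, zpow_natCast, mul_inv_eq_iff_eq_mul]
      exact hk
    have hcop : IsCoprime (p : ℤ) (1 - p * k) := ⟨k, 1, by ring⟩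
    exact hxp (M.pow_mem
      (mem_of_zpow_mem_of_isCoprime hcop.pow_left hxjM (hxk ▸ hm)) p)
  · have hMP : P ≤ Subgroup.normalizer M :=
      (Subgroup.normal_subgroupOf_iff_le_normalizer hM.1.le).1 hM.normal_subgroupOf
    by_cases hxM : x ∈ M
    · exact Subgroup.le_normalizer_iff_commutator_le_left.1 hMP
        (Subgroup.commutator_mem_commutator hxM hy)
    obtain ⟨m, hm, k, rfl⟩ := hM.exists_eq_mul_zpow hx hxM hy
    have hxm := (Subgroup.mem_normalizer_iff.1 (hMP hx) m).1 hm
    convert M.mul_mem hxm (M.inv_mem hm) using 1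
    rw [commutatorElement_def]
    group

/-- The Frattini subgroup `Φ(P)` of a subgroup `P`, seen in the ambient group. -/
def frattiniIn {G : Type*} [Group G] (P : Subgroup G) : Subgroup G := (frattini P).map P.subtype

section FrattiniIn

variable {G : Type*} [Group G] {P X : Subgroup G}

theorem frattiniIn_le : frattiniIn P ≤ P := Subgroup.map_subtype_le _

instance frattiniIn_normal [P.Normal] : (frattiniIn P).Normal :=
  ConjAct.normal_of_characteristic_of_normal

theorem le_frattiniIn (hXP : X ≤ P) (hX : ∀ M, IsMaximalIn M P → X ≤ M) : X ≤ frattiniIn P := by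
  intro x hx
  refine ⟨⟨x, hXP hx⟩, ?_, rfl⟩
  simp only [frattini, Order.radical, Subgroup.coe_iInf, Set.mem_iInter]
  intro M hM
  obtain ⟨y, hy, hyx⟩ := hX _ (IsMaximalIn.of_isCoatom hM) hx
  exact (Subtype.ext hyx : y = ⟨x, hXP hx⟩) ▸ hy

variable [Finite G]

theorem le_of_le_sup_frattiniIn (hX : X ≤ P) (h : P ≤ X ⊔ frattiniIn P) : P ≤ X := by
  refine Subgroup.subgroupOf_eq_top.1 (frattini_nongenerating ?_)
  refine Subgroup.map_injective P.subtype_injective ?_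
  rw [Subgroup.map_sup, Subgroup.map_subgroupOf_eq_of_le hX, ← MonoidHom.range_eq_map,
    Subgroup.range_subtype]
  exact le_antisymm (sup_le hX frattiniIn_le) h

theorem frattiniIn_le_frattini [P.Normal] : frattiniIn P ≤ frattini G := by
  by_contra hle
  obtain ⟨M, hM, hnle⟩ := exists_isCoatom_not_le_of_not_le_frattini hle
  have hsup : M ⊔ frattiniIn P = ⊤ := hM.2 _ (left_lt_sup.2 hnle)
  refine hnle (frattiniIn_le.trans (le_of_le_sup_frattiniIn (X := M ⊓ P) inf_le_right ?_
    |>.trans inf_le_left))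
  intro x hx
  obtain ⟨m, hm, f, hf, rfl⟩ := Subgroup.mem_sup_of_normal_right.1 (hsup.ge (Subgroup.mem_top x))
  exact Subgroup.mul_mem_sup ⟨hm, (P.mul_mem_cancel_right (frattiniIn_le hf)).1 hx⟩ hf

theorem isElementaryAbelianSection_frattiniIn {p : ℕ} (hp : p.Prime) (hP : IsPGroup p P) :
    IsElementaryAbelianSection p (frattiniIn P) P where
  pow_mem x hx := by
    refine Subgroup.zpowers_le.1 (le_frattiniIn (Subgroup.zpowers_le.2 (P.pow_mem hx p)) ?_)
    exact fun M hM ↦ Subgroup.zpowers_le.2 ((hM.isElementaryAbelianSection hp hP).pow_mem x hx)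
  commutator_le := le_frattiniIn P.commutator_le_self fun M hM ↦
    (hM.isElementaryAbelianSection hp hP).commutator_le

theorem SylowMaximalCondition.uHypercentral_frattiniIn {E : Subgroup G}
    (hE : SylowMaximalCondition E) {p : ℕ} (hp : p.Prime) [P.Normal] (hP : IsSylowIn p P E) :
    UHypercentral (frattiniIn P) P := by
  by_cases hc : IsCyclic P
  · obtain ⟨g, hg⟩ := hc.exists_generator
    refine UHypercentral.of_cyclic inferInstance ‹_› frattiniIn_le g.2 fun x hx ↦ ?_
    obtain ⟨m, hm⟩ := hg ⟨x, hx⟩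
    have hmx : (g : G) ^ m = x := congrArg Subtype.val hm
    exact ⟨m, by simp [hmx, one_mem]⟩
  · exact (isElementaryAbelianSection_frattiniIn hp hP.2.1).uHypercentral inferInstance hp hP.2.1
      frattiniIn_le (hE p hp P hP hc)

end FrattiniIn

/-! ## Groups acting coprimely trivially on a nilpotent normal subgroup -/

theorem le_normalizer_sup_of_commutator_le {G : Type*} [Group G] {Q R Z : Subgroup G} [Z.Normal]
    (h : ⁅Q, R⁆ ≤ Z) : R ≤ Subgroup.normalizer (Q ⊔ Z : Subgroup G) := by
  refine Subgroup.le_normalizer_iff_commutator_le_left.2 (Subgroup.commutator_le.2 ?_)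
  intro x hx g hg
  obtain ⟨a, ha, z, hz, rfl⟩ := Subgroup.mem_sup_of_normal_right.1 hx
  have hzg : ⁅z, g⁆ ∈ Z :=
    Subgroup.commutator_le_left Z ⊤ (Subgroup.commutator_mem_commutator hz (Subgroup.mem_top g))
  rw [commutatorElement_mul_left_eq_conj_mul]
  exact Subgroup.mem_sup_right (Z.mul_mem (Subgroup.Normal.conj_mem ‹_› _ hzg a)
    (h (Subgroup.commutator_mem_commutator ha hg)))

namespace IsSylowIn

variable {G : Type*} [Group G] [Finite G] {p : ℕ} {A E P : Subgroup G}

theorem le_of_isPGroup_sup (hp : p.Prime) (hP : IsSylowIn p P E) (hAE : A ≤ E)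
    (hA : IsPGroup p (A ⊔ P : Subgroup G)) : A ≤ P := by
  refine le_sup_left.trans (le_of_isPGroup_of_not_dvd_relIndex hp hA fun h ↦ hP.2.2 ?_)
  exact h.trans (Dvd.intro _ (Subgroup.relIndex_mul_relIndex _ _ _ le_sup_right (sup_le hAE hP.1)))

theorem normal [E.Normal] [Group.IsNilpotent E] (hp : p.Prime) (hP : IsSylowIn p P E) :
    P.Normal := by
  have := Fact.mk hp
  let S : Sylow p E := (hP.2.1.comap_of_injective _ E.subtype_injective).toSylow hP.2.2
  have hnormal := ((Group.isNilpotent_of_finite_tfae (G := E)).out 0 3).1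
  have hS : (S : Subgroup E).Normal := hnormal ‹_› p ‹_› S
  have : (P.subgroupOf E).Characteristic := S.characteristic_of_normal hS
  rw [← Subgroup.map_subgroupOf_eq_of_le hP.1]
  exact ConjAct.normal_of_characteristic_of_normal

theorem le_normalizer_of_le_normalizer_sup {K Q Z : Subgroup G} (hp : p.Prime)
    (hQ : IsSylowIn p Q K) (hZ : Z ≤ Subgroup.normalizer Q)
    (hK : K ≤ Subgroup.normalizer (Q ⊔ Z : Subgroup G)) : K ≤ Subgroup.normalizer Q := by
  refine Subgroup.le_normalizer_iff_commutator_le_right.2 (Subgroup.commutator_le.2 ?_)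
  intro k hk x hx
  have hconj : Q.map (MulAut.conj k).toMonoidHom ≤ Q := by
    have := Fact.mk hp
    refine hQ.le_of_isPGroup_sup hp ?_ ((hQ.2.1.map _).to_sup_of_normal_right' hQ.2.1 ?_)
    · rintro _ ⟨y, hy, rfl⟩
      exact K.mul_mem (K.mul_mem hk (hQ.1 hy)) (K.inv_mem hk)
    · rintro _ ⟨y, hy, rfl⟩
      exact (sup_le Subgroup.le_normalizer hZ)
        ((Subgroup.mem_normalizer_iff.1 (hK hk) y).1 (Subgroup.mem_sup_left hy))
  exact Q.mul_mem (hconj ⟨x, hx, rfl⟩) (Q.inv_mem hx)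

end IsSylowIn

theorem isNilpotent_of_forall_isSylowIn {G : Type*} [Group G] [Finite G] {K : Subgroup G}
    (h : ∀ p : ℕ, p.Prime → ∀ P, IsSylowIn p P K → K ≤ Subgroup.normalizer P) :
    Group.IsNilpotent K := by
  refine ((Group.isNilpotent_of_finite_tfae (G := K)).out 0 3).2 ?_
  intro p hp P
  have hcomap : ((P : Subgroup K).map K.subtype).subgroupOf K = P :=
    Subgroup.comap_map_eq_self_of_injective K.subtype_injective _
  have hP : IsSylowIn p ((P : Subgroup K).map K.subtype) K :=
    ⟨Subgroup.map_subtype_le _, P.2.map _, by rw [hcomap]; exact P.not_dvd_index⟩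
  exact hcomap ▸ (Subgroup.normal_subgroupOf_iff_le_normalizer hP.1).2 (h p hp.out _ hP)

/-- For distinct primes `p` and `q`, every `q`-subgroup of `K` centralizes every Sylow
`p`-subgroup of `F`. -/
def ActsCoprimelyTrivially {G : Type*} [Group G] (K F : Subgroup G) : Prop :=
  ∀ p q : ℕ, p.Prime → q.Prime → p ≠ q → ∀ P Q : Subgroup G, IsSylowIn p P F → Q ≤ K →
    IsPGroup q Q → Q ≤ Subgroup.centralizer (P : Set G)

namespace ActsCoprimelyTrivially

variable {G : Type*} [Group G] [Finite G] {F K Q R : Subgroup G} [F.Normal]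
  [Group.IsNilpotent F] {q r : ℕ}

theorem commutator_le_centralizer (h : ActsCoprimelyTrivially K F) (hq : q.Prime) (hr : r.Prime)
    (hqr : q ≠ r) (hQ : IsPGroup q Q) (hQK : Q ≤ K) (hR : IsPGroup r R) (hRK : R ≤ K) :
    ⁅Q, R⁆ ≤ Subgroup.centralizer (F : Set G) := by
  refine Subgroup.le_centralizer_iff.1 (le_of_forall_isSylowIn fun p hp ↦ ?_)
  obtain ⟨P, hP⟩ := IsSylowIn.exists_of_prime hp F
  have := hP.normal hp
  refine ⟨P, hP, Subgroup.le_centralizer_iff.1 ?_⟩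
  by_cases hpq : p = q
  · exact (Subgroup.commutator_mono le_rfl
      (h p r hp hr (hpq ▸ hqr) P R hP hRK hR)).trans (Subgroup.commutator_le_right _ _)
  · exact (Subgroup.commutator_mono
      (h p q hp hq hpq P Q hP hQK hQ) le_rfl).trans (Subgroup.commutator_le_left _ _)

theorem inf_centralizer_le_normalizer (h : ActsCoprimelyTrivially K F) [K.Normal]
    (hC : K ⊓ Subgroup.centralizer (F : Set G) ≤ F) (hq : q.Prime) (hQ : IsSylowIn q Q K) :
    K ⊓ Subgroup.centralizer (F : Set G) ≤ Subgroup.normalizer Q := by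
  refine le_of_forall_isSylowIn fun r hr ↦ ?_
  obtain ⟨T, hT⟩ := IsSylowIn.exists_of_prime hr (K ⊓ Subgroup.centralizer (F : Set G))
  obtain ⟨S, hS⟩ := IsSylowIn.exists_of_prime hr F
  have := hS.normal hr
  have := Fact.mk hr
  have hTS : T ≤ S := hS.le_of_isPGroup_sup hr (hT.1.trans hC)
    (hT.2.1.to_sup_of_normal_right hS.2.1)
  refine ⟨T, hT, ?_⟩
  by_cases hrq : r = q
  · subst hrq
    have hSQ : S ⊓ K ≤ Q := hQ.le_of_isPGroup_sup hr inf_le_right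
      ((hS.2.1.to_le inf_le_left).to_sup_of_normal_left hQ.2.1)
    exact (le_inf hTS (hT.1.trans inf_le_left)).trans (hSQ.trans Subgroup.le_normalizer)
  · have hQS := h r q hr hq hrq S Q hS hQ.1 hQ.2.1
    exact hTS.trans ((Subgroup.le_centralizer_iff.1 hQS).trans
      (Subgroup.centralizer_le_normalizer _))

-- `Q (K ⊓ C(F))` is normal in `K`, and `Q` is its unique Sylow `q`-subgroup.
theorem isNilpotent (h : ActsCoprimelyTrivially K F) [K.Normal]
    (hC : K ⊓ Subgroup.centralizer (F : Set G) ≤ F) : Group.IsNilpotent K := by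
  refine isNilpotent_of_forall_isSylowIn fun q hq Q hQ ↦ hQ.le_normalizer_of_le_normalizer_sup hq
    (h.inf_centralizer_le_normalizer hC hq hQ) (le_of_forall_isSylowIn fun r hr ↦ ?_)
  by_cases hrq : r = q
  · exact ⟨Q, hrq ▸ hQ, le_sup_left.trans Subgroup.le_normalizer⟩
  obtain ⟨R, hR⟩ := IsSylowIn.exists_of_prime hr K
  refine ⟨R, hR, le_normalizer_sup_of_commutator_le (le_inf ?_ ?_)⟩
  · exact (Subgroup.commutator_mono hQ.1 hR.1).trans (Subgroup.commutator_le_left K K)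
  · exact h.commutator_le_centralizer hq hr (Ne.symm hrq) hQ.2.1 hQ.1 hR.2.1 hR.1

end ActsCoprimelyTrivially

/-! ## The `𝔉`-residual and the theorem -/

theorem IsSaturatedFormationContainingU.exists_residual {𝔉 : ∀ (X : Type u) [Group X], Prop}
    (h𝔉 : IsSaturatedFormationContainingU 𝔉) (G : Type u) [Group G] [Finite G] :
    ∃ R : Subgroup G, ∃ _ : R.Normal, 𝔉 (G ⧸ R) ∧
      ∀ (N : Subgroup G) [N.Normal], 𝔉 (G ⧸ N) → R ≤ N := by
  obtain ⟨R, ⟨hR, hGR⟩, hmin⟩ :=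
    (Set.toFinite {N : Subgroup G | ∃ _ : N.Normal, 𝔉 (G ⧸ N)}).exists_minimal
      ⟨⊤, inferInstance, h𝔉.of_isSupersoluble _ (UHypercentral.isSupersoluble_quotient .rfl)⟩
  refine ⟨R, hR, hGR, fun N hN hGN ↦ ?_⟩
  have hinf := h𝔉.quotient_inf G R N hR hN hGR hGN
  exact (hmin ⟨inferInstance, hinf⟩ inf_le_left).trans inf_le_right

namespace SylowMaximalCondition

variable {G : Type u} [Group G] [Finite G] {F : Subgroup G} [F.Normal] [Group.IsNilpotent F]

theorem actsCoprimelyTrivially {𝔉 : ∀ (X : Type u) [Group X], Prop}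
    (hF : SylowMaximalCondition F) (h𝔉 : IsSaturatedFormationContainingU 𝔉) {R : Subgroup G}
    (hR : ∀ (N : Subgroup G) [N.Normal], 𝔉 (G ⧸ N) → R ≤ N) : ActsCoprimelyTrivially R F := by
  intro p q hp hq hpq P Q hP hQR hQ
  have := Fact.mk hp
  have := hP.normal hp
  obtain ⟨C, hC, hGC, hcent⟩ :=
    h𝔉.exists_centralizing_of_uHypercentral (hF.uHypercentral_frattiniIn hp hP)
  have hqP : ¬ q ∣ Nat.card P := fun hd ↦ by
    obtain ⟨k, hk⟩ := IsPGroup.iff_card.1 hP.2.1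
    exact hpq ((Nat.prime_dvd_prime_iff_eq hq hp).1 (hq.dvd_of_dvd_pow (hk ▸ hd))).symm
  refine Subgroup.le_centralizer_iff.1 fun y hy ↦ Subgroup.mem_centralizer_iff.2 fun x hx ↦ ?_
  obtain ⟨k, hk⟩ := hQ ⟨x, hx⟩
  have hxq : IsPElement q x := ⟨k, congrArg Subtype.val hk⟩
  have hle := le_of_le_sup_frattiniIn inf_le_right (hcent q hq hqP x (hR C hGC (hQR hx)) hxq)
  exact Subgroup.mem_centralizer_iff.1 (hle hy).1 x rfl

theorem exists_ge_uHypercentral_frattini (hF : SylowMaximalCondition F) :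
    ∃ A, F ≤ A ∧ UHypercentral (frattini G) A := by
  obtain ⟨A, hA, hmax⟩ := UHypercentral.exists_greatest (frattini G)
  refine ⟨A, le_of_forall_isSylowIn fun p hp ↦ ?_, hA⟩
  obtain ⟨P, hP⟩ := IsSylowIn.exists_of_prime hp F
  have := hP.normal hp
  have hPΦ := (hF.uHypercentral_frattiniIn hp hP).sup_right (X := frattini G) inferInstance
  rw [sup_eq_right.2 frattiniIn_le_frattini] at hPΦ
  exact ⟨P, hP, le_sup_left.trans (hmax _ hPΦ)⟩

end SylowMaximalCondition

theorem stmt_2_general {𝔉 : ∀ (X : Type u) [Group X], Prop}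
    (h𝔉 : IsSaturatedFormationContainingU 𝔉) {G : Type u} [Group G] [Finite G] (H : Subgroup G)
    [H.Normal] (hGH : 𝔉 (G ⧸ H)) (hF : SylowMaximalCondition (FStarIn H)) : 𝔉 G := by
  have := hF.isNilpotent_fStarIn
  obtain ⟨R, _, hGR, hmin⟩ := h𝔉.exists_residual G
  have hRH : R ≤ H := hmin H hGH
  have hRnil : Group.IsNilpotent R := (hF.actsCoprimelyTrivially h𝔉 hmin).isNilpotent
    ((inf_le_inf_right _ hRH).trans inf_centralizer_fStarIn_le)
  have hRF : R ≤ FStarIn H := le_fStarIn_of_isNilpotent hRH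
  obtain ⟨A, hFA, hA⟩ := hF.exists_ge_uHypercentral_frattini
  have := hA.normal inferInstance
  exact h𝔉.of_quotient_frattini G
    (h𝔉.of_quotient_uHypercentral hA (h𝔉.quotient_mono (hRF.trans hFA) hGR))

/-- Let `𝔉` be an S-closed saturated formation of finite groups
containing all supersoluble groups, and `H ⊴ G` with `G/H ∈ 𝔉`. If every maximal
subgroup of every non-cyclic Sylow subgroup of `F*(H)` having no supersoluble
supplement in `G` is 𝔘ₛ-quasinormal in `G`, then `G ∈ 𝔉`. -/
theorem stmt_2 {G : Type u} [Group G] [Finite G]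
    (𝔉 : ∀ (X : Type u) [Group X], Prop)
    (hiso : ∀ (X Y : Type u) [Group X] [Group Y] [Finite X] [Finite Y],
      (X ≃* Y) → 𝔉 X → 𝔉 Y)
    (hhom : ∀ (X Y : Type u) [Group X] [Group Y] [Finite X] [Finite Y] (f : X →* Y),
      Function.Surjective f → 𝔉 X → 𝔉 Y)
    (hres : ∀ (X : Type u) [Group X] [Finite X] (M N : Subgroup X)
      (_ : M.Normal) (_ : N.Normal), 𝔉 (X ⧸ M) → 𝔉 (X ⧸ N) → 𝔉 (X ⧸ (M ⊓ N)))
    (hsat : ∀ (X : Type u) [Group X] [Finite X], 𝔉 (X ⧸ frattini X) → 𝔉 X)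
    (hSclosed : ∀ (X : Type u) [Group X] [Finite X] (K : Subgroup X), 𝔉 X → 𝔉 K)
    (hU : ∀ (X : Type u) [Group X] [Finite X], IsSupersoluble X → 𝔉 X)
    (H : Subgroup G) (hH : H.Normal) (hGH : 𝔉 (G ⧸ H))
    (hyp : ∀ p : ℕ, p.Prime → ∀ P : Subgroup G, IsSylowIn p P (FStarIn H) →
      ¬ IsCyclic P → ∀ M : Subgroup G, IsMaximalIn M P →
        ¬ HasSupersolubleSupplement M → UsQuasinormal M) :
    𝔉 G :=
  stmt_2_general ⟨hhom, hres, hsat, hU⟩ H hGH hyp
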